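/- arXiv:0711.4849 — 7 statements merged into one kernel-verified Lean document; each statement's English description precedes it below -/
import Mathlib

section
/- Let J₁ and J₂ be Poisson vectors on an open set U ⊆ ℝ³ (i.e., J₁·(curl J₁) = 0 and J₂·(curl J₂) = 0 on U), and let c be a smooth scalar function on U satisfying (J₁ × J₂)·∇c = (J₁·(curl J₂) + J₂·(curl J₁)) c at every point of U. Then the vector field J₁ + cJ₂ satisfies the Jacobi identity: (J₁ + cJ₂)·(curl (J₁ + cJ₂)) = 0 on U. -/
/-!
By the Leibniz rule, `curl (J₁ + c J₂) = curl J₁ + c curl J₂ + ∇c × J₂`. Dotting with `J₁ + c J₂`,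
the term `c J₂ · (∇c × J₂)` vanishes and `J₁ · (∇c × J₂) = -(J₁ × J₂) · ∇c`, so the result is
`J₁ · curl J₁ + c² J₂ · curl J₂ + c (J₁ · curl J₂ + J₂ · curl J₁) - (J₁ × J₂) · ∇c`.
The first two terms vanish because `J₁` and `J₂` are Poisson vectors, and the last two cancel by the
equation for `c`. The Leibniz rule is `pd_add_smul`; the rest is polynomial algebra at a point.
-/

noncomputable section

/-- Three-dimensional Euclidean space. -/
abbrev E3 : Type := EuclideanSpace ℝ (Fin 3)

/-- The Euclidean dot product on ℝ³. -/
def dot (u v : E3) : ℝ := ∑ i, u i * v i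

/-- The cross product on ℝ³. -/
def cross (u v : E3) : E3 :=
  (WithLp.equiv 2 (Fin 3 → ℝ)).symm
    ![u 1 * v 2 - u 2 * v 1, u 2 * v 0 - u 0 * v 2, u 0 * v 1 - u 1 * v 0]

/-- Partial derivative of a scalar function in the `i`-th coordinate direction. -/
def pd (i : Fin 3) (f : E3 → ℝ) (x : E3) : ℝ :=
  fderiv ℝ f x (EuclideanSpace.single i 1)

/-- The gradient ∇f of a scalar function. -/
def grad (f : E3 → ℝ) (x : E3) : E3 :=
  (WithLp.equiv 2 (Fin 3 → ℝ)).symm ![pd 0 f x, pd 1 f x, pd 2 f x]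

/-- The curl ∇×F of a vector field. -/
def curl (F : E3 → E3) (x : E3) : E3 :=
  (WithLp.equiv 2 (Fin 3 → ℝ)).symm
    ![pd 1 (fun y => F y 2) x - pd 2 (fun y => F y 1) x,
      pd 2 (fun y => F y 0) x - pd 0 (fun y => F y 2) x,
      pd 0 (fun y => F y 1) x - pd 1 (fun y => F y 0) x]

/-- Directional derivative ∂ₛ f = t·∇f of a scalar function along a vector field t. -/
def ds (t : E3 → E3) (f : E3 → ℝ) (x : E3) : ℝ := dot (t x) (grad f x)

/-- Componentwise directional derivative (u·∇)w of a vector field w along u. -/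
def dirDeriv (u w : E3 → E3) (x : E3) : E3 :=
  (WithLp.equiv 2 (Fin 3 → ℝ)).symm
    ![fderiv ℝ (fun y => w y 0) x (u x),
      fderiv ℝ (fun y => w y 1) x (u x),
      fderiv ℝ (fun y => w y 2) x (u x)]

/-- Helicity density w·(curl w) of a vector field. -/
def hel (w : E3 → E3) (x : E3) : ℝ := dot (w x) (curl w x)

/-- Cross-helicity sum n·(curl b) + b·(curl n). -/
def crossHel (n b : E3 → E3) (x : E3) : ℝ :=
  dot (n x) (curl b x) + dot (b x) (curl n x)

/-- A smooth right-handed orthonormal (Serret–Frenet type) frame on U. -/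
def IsFrameOn (t n b : E3 → E3) (U : Set E3) : Prop :=
  ContDiffOn ℝ (⊤ : ℕ∞) t U ∧ ContDiffOn ℝ (⊤ : ℕ∞) n U ∧ ContDiffOn ℝ (⊤ : ℕ∞) b U ∧
  ∀ x ∈ U, ‖t x‖ = 1 ∧ ‖n x‖ = 1 ∧ ‖b x‖ = 1 ∧
    dot (t x) (n x) = 0 ∧ dot (t x) (b x) = 0 ∧ dot (n x) (b x) = 0 ∧
    b x = cross (t x) (n x)

/-- The Leibniz rule for a partial derivative of a component of `J₁ + c J₂`. -/
theorem pd_add_smul {J₁ J₂ : E3 → E3} {c : E3 → ℝ} {x : E3}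
    (h1 : DifferentiableAt ℝ J₁ x) (h2 : DifferentiableAt ℝ J₂ x)
    (hc : DifferentiableAt ℝ c x) (i j : Fin 3) :
    pd i (fun y => (J₁ y + c y • J₂ y) j) x
      = pd i (fun y => J₁ y j) x + c x * pd i (fun y => J₂ y j) x + J₂ x j * pd i c x := by
  have h1j : DifferentiableAt ℝ (fun y => J₁ y j) x := (differentiableAt_euclidean.mp h1) j
  have h2j : DifferentiableAt ℝ (fun y => J₂ y j) x := (differentiableAt_euclidean.mp h2) j
  have h := h1j.hasFDerivAt.add (hc.hasFDerivAt.mul h2j.hasFDerivAt)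
  have h' : HasFDerivAt (fun y => (J₁ y + c y • J₂ y) j) _ x := h
  simp only [pd, h'.fderiv, add_apply, smul_apply,
    smul_eq_mul]
  ring

/-- if c solves (J₁×J₂)·∇c = (J₁·curl J₂ + J₂·curl J₁) c then
J₁ + cJ₂ satisfies the Jacobi identity. -/
theorem jacobi_of_function_coefficient
    (U : Set E3) (hU : IsOpen U) (J₁ J₂ : E3 → E3) (c : E3 → ℝ)
    (h1 : ContDiffOn ℝ (⊤ : ℕ∞) J₁ U) (h2 : ContDiffOn ℝ (⊤ : ℕ∞) J₂ U)
    (hc : ContDiffOn ℝ (⊤ : ℕ∞) c U)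
    (hP1 : ∀ x ∈ U, dot (J₁ x) (curl J₁ x) = 0)
    (hP2 : ∀ x ∈ U, dot (J₂ x) (curl J₂ x) = 0)
    (hpde : ∀ x ∈ U, dot (cross (J₁ x) (J₂ x)) (grad c x)
        = (dot (J₁ x) (curl J₂ x) + dot (J₂ x) (curl J₁ x)) * c x) :
    ∀ x ∈ U, dot (J₁ x + c x • J₂ x) (curl (fun y => J₁ y + c y • J₂ y) x) = 0 := by
  intro x hx
  have hd1 := (h1.contDiffAt (hU.mem_nhds hx)).differentiableAt (by simp)
  have hd2 := (h2.contDiffAt (hU.mem_nhds hx)).differentiableAt (by simp)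
  have hdc := (hc.contDiffAt (hU.mem_nhds hx)).differentiableAt (by simp)
  have e1 := hP1 x hx
  have e2 := hP2 x hx
  have e3 := hpde x hx
  simp only [curl, pd_add_smul hd1 hd2 hdc]
  simp [dot, curl, cross, grad, Fin.sum_univ_three] at e1 e2 e3 ⊢
  -- The helicity of `J₁ + c J₂` is that of `J₁`, plus `c ^ 2` times that of `J₂`, plus
  -- `c (J₁ · curl J₂ + J₂ · curl J₁) - (J₁ × J₂) · ∇c`.
  linear_combination e1 + c x ^ 2 * e2 - e3
end
end

section
/- Let (t, n, b) be a smooth right-handed orthonormal frame on an open set U ⊆ ℝ³, let α be a smooth nowhere-zero scalar function and μ a smooth scalar function on U, and set J = α(n + μb). Then J satisfies the Jacobi identity J·(curl J) = 0 on U if and only if μ satisfies the Riccati equation ∂_s μ = Ω_n + μ Ω_nb + μ² Ω_b at every point of U. -/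
/-!
Write `J = α (n + μ b)`. By the Leibniz rule, `curl J = α (curl n + μ curl b + ∇μ × b) + ∇α × (n + μ b)`.
The term in `∇α` is orthogonal to `J`, and `b · (∇μ × b) = 0`, while
`n · (∇μ × b) = -∇μ · (n × b) = -∇μ · t` because `t = n × b` in a right-handed orthonormal frame. Hence
`J · curl J = α² (Ωₙ + μ Ωₙᵦ + μ² Ωᵦ - ∂ₛμ)` pointwise (`dot_curl_smul_add`), and `α² ≠ 0`.
-/

noncomputable section

/-- In a right-handed orthonormal frame `t = n × b`, here in coordinates. -/
lemma eq_cross_of_frame {t n b : E3} (hn : ‖n‖ = 1) (htn : dot t n = 0) (hb : b = cross t n) :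
    t 0 = n 1 * b 2 - n 2 * b 1 ∧ t 1 = n 2 * b 0 - n 0 * b 2 ∧ t 2 = n 0 * b 1 - n 1 * b 0 := by
  have hn2 : n 0 ^ 2 + n 1 ^ 2 + n 2 ^ 2 = 1 := by
    have h := EuclideanSpace.norm_sq_eq n
    rw [hn] at h
    simpa [Fin.sum_univ_three] using h.symm
  simp only [dot, Fin.sum_univ_three] at htn
  subst hb
  simp only [cross, WithLp.equiv_symm_apply, Matrix.cons_val]
  refine ⟨?_, ?_, ?_⟩
  · linear_combination (-t 0) * hn2 + n 0 * htn
  · linear_combination (-t 1) * hn2 + n 1 * htn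
  · linear_combination (-t 2) * hn2 + n 2 * htn

lemma pd_mul_add_mul {α μ f g : E3 → ℝ} {x : E3} (i : Fin 3)
    (hα : DifferentiableAt ℝ α x) (hμ : DifferentiableAt ℝ μ x)
    (hf : DifferentiableAt ℝ f x) (hg : DifferentiableAt ℝ g x) :
    pd i (fun y => α y * (f y + μ y * g y)) x
      = pd i α x * (f x + μ x * g x)
        + α x * (pd i f x + pd i μ x * g x + μ x * pd i g x) := by
  have h := hα.hasFDerivAt.mul (hf.hasFDerivAt.add (hμ.hasFDerivAt.mul hg.hasFDerivAt))
  have h' : HasFDerivAt (fun y => α y * (f y + μ y * g y)) _ x := h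
  simp only [pd, h'.fderiv]
  simp
  ring

/-- The pointwise identity `J · curl J = α² (Ωₙ + μ Ωₙᵦ + μ² Ωᵦ - ∂ₛμ)` for `J = α (n + μ b)`. -/
lemma dot_curl_smul_add {t n b : E3 → E3} {α μ : E3 → ℝ} {x : E3}
    (hα : DifferentiableAt ℝ α x) (hμ : DifferentiableAt ℝ μ x)
    (hn : DifferentiableAt ℝ n x) (hb : DifferentiableAt ℝ b x)
    (hn1 : ‖n x‖ = 1) (htn : dot (t x) (n x) = 0) (hbx : b x = cross (t x) (n x)) :
    dot (α x • (n x + μ x • b x)) (curl (fun y => α y • (n y + μ y • b y)) x)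
      = α x ^ 2 * (hel n x + μ x * crossHel n b x + μ x ^ 2 * hel b x - ds t μ x) := by
  obtain ⟨h0, h1, h2⟩ := eq_cross_of_frame hn1 htn hbx
  have hpd : ∀ i j : Fin 3, pd i (fun y => α y * (n y j + μ y * b y j)) x
      = pd i α x * (n x j + μ x * b x j)
        + α x * (pd i (fun y => n y j) x + pd i μ x * b x j
          + μ x * pd i (fun y => b y j) x) := fun i j =>
    pd_mul_add_mul i hα hμ (differentiableAt_euclidean.1 hn j) (differentiableAt_euclidean.1 hb j)
  simp only [hel, crossHel, ds, dot, curl, grad, Fin.sum_univ_three, WithLp.equiv_symm_apply,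
    Matrix.cons_val, PiLp.add_apply, PiLp.smul_apply, smul_eq_mul, hpd, h0, h1, h2]
  ring

/-- J = α(n + μb) satisfies the Jacobi identity iff μ satisfies the
Riccati equation ∂ₛμ = Ωₙ + μ Ωₙᵦ + μ² Ωᵦ. -/
theorem jacobi_iff_riccati_mu
    (U : Set E3) (hU : IsOpen U) (t n b : E3 → E3)
    (hframe : IsFrameOn t n b U)
    (α μ : E3 → ℝ)
    (hα : ContDiffOn ℝ (⊤ : ℕ∞) α U) (hμ : ContDiffOn ℝ (⊤ : ℕ∞) μ U)
    (hα0 : ∀ x ∈ U, α x ≠ 0) :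
    (∀ x ∈ U, dot (α x • (n x + μ x • b x))
        (curl (fun y => α y • (n y + μ y • b y)) x) = 0)
      ↔ (∀ x ∈ U, ds t μ x
          = hel n x + μ x * crossHel n b x + μ x ^ 2 * hel b x) := by
  obtain ⟨-, hn, hb, hfr⟩ := hframe
  refine forall₂_congr fun x hx => ?_
  have hxU : U ∈ nhds x := hU.mem_nhds hx
  obtain ⟨-, hn1, -, htn, -, -, hbx⟩ := hfr x hx
  rw [dot_curl_smul_add ((hα.contDiffAt hxU).differentiableAt (by simp))
    ((hμ.contDiffAt hxU).differentiableAt (by simp))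
    ((hn.contDiffAt hxU).differentiableAt (by simp))
    ((hb.contDiffAt hxU).differentiableAt (by simp)) hn1 htn hbx,
    mul_eq_zero, or_iff_right (pow_ne_zero 2 (hα0 x hx)), sub_eq_zero, eq_comm]
end
end

section
/- Let (t, n, b) be a smooth right-handed orthonormal frame on an open set U ⊆ ℝ³, let β be a smooth nowhere-zero scalar function and η a smooth scalar function on U, and set J = β(b − ηn). Then J satisfies the Jacobi identity J·(curl J) = 0 on U if and only if η satisfies the Riccati equation ∂_s η = Ω_b − η Ω_nb + η² Ω_n at every point of U. -/
/-!
The factor `β` only rescales: `J·curl J = β² (w·curl w)` for `w = b - η n`, because the term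
`w·(∇β × w)` vanishes (`dot_curl_smul`). Expanding `curl (η n) = ∇η × n + η curl n` gives
`w·curl w = Ω_b - η Ω_nb + η² Ω_n - b·(∇η × n)`, where `n·(∇η × n) = 0` has been used
(`dot_curl_sub_smul`). Finally `b·(∇η × n) = (n × b)·∇η = t·∇η`, since `b = t × n` together with
`t·n = 0` and `n·n = 1` yields `t = n × b` (`triple_eq_ds`). As `β` has no zeros, the pointwise
vanishing of `J·curl J` is the Riccati equation.
-/

noncomputable section

lemma pd_mul {f g : E3 → ℝ} {x : E3} (hf : DifferentiableAt ℝ f x) (hg : DifferentiableAt ℝ g x)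
    (i : Fin 3) : pd i (fun y => f y * g y) x = f x * pd i g x + g x * pd i f x := by
  simp [pd, fderiv_fun_mul hf hg]

lemma pd_sub {f g : E3 → ℝ} {x : E3} (hf : DifferentiableAt ℝ f x) (hg : DifferentiableAt ℝ g x)
    (i : Fin 3) : pd i (fun y => f y - g y) x = pd i f x - pd i g x := by
  simp [pd, fderiv_fun_sub hf hg]

lemma differentiableAt_coord {F : E3 → E3} {x : E3} (hF : DifferentiableAt ℝ F x) (i : Fin 3) :
    DifferentiableAt ℝ (fun y => F y i) x :=
  differentiableAt_euclidean.mp hF i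

lemma curl_smul {f : E3 → ℝ} {F : E3 → E3} {x : E3} (hf : DifferentiableAt ℝ f x)
    (hF : DifferentiableAt ℝ F x) :
    curl (fun y => f y • F y) x = cross (grad f x) (F x) + f x • curl F x := by
  have hFi := differentiableAt_coord hF
  ext i
  fin_cases i <;>
    simp [curl, cross, grad, pd_mul hf (hFi _)] <;> ring

lemma curl_sub {F G : E3 → E3} {x : E3} (hF : DifferentiableAt ℝ F x)
    (hG : DifferentiableAt ℝ G x) :
    curl (fun y => F y - G y) x = curl F x - curl G x := by
  have hFi := differentiableAt_coord hF
  have hGi := differentiableAt_coord hG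
  ext i
  fin_cases i <;>
    simp [curl, pd_sub (hFi _) (hGi _)] <;> ring

/-- The helicity density of a field is multiplied by `f²` when the field is multiplied by `f`. -/
lemma dot_curl_smul {f : E3 → ℝ} {F : E3 → E3} {x : E3} (hf : DifferentiableAt ℝ f x)
    (hF : DifferentiableAt ℝ F x) :
    dot (f x • F x) (curl (fun y => f y • F y) x) = f x ^ 2 * dot (F x) (curl F x) := by
  rw [curl_smul hf hF]
  simp [dot, cross, Fin.sum_univ_three]
  ring

lemma dot_curl_sub_smul {η : E3 → ℝ} {n b : E3 → E3} {x : E3} (hη : DifferentiableAt ℝ η x)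
    (hn : DifferentiableAt ℝ n x) (hb : DifferentiableAt ℝ b x) :
    dot (b x - η x • n x) (curl (fun y => b y - η y • n y) x) =
      hel b x - η x * crossHel n b x + η x ^ 2 * hel n x
        - dot (b x) (cross (grad η x) (n x)) := by
  rw [curl_sub hb (hη.fun_smul hn), curl_smul hη hn]
  simp [dot, hel, crossHel, cross, Fin.sum_univ_three]
  ring

/-- For `v = ∇η` this identifies `b·(∇η × n)` with the derivative of `η` along `t`. -/
lemma triple_eq_ds {t n b : E3} (v : E3) (hn : ‖n‖ = 1) (htn : dot t n = 0)
    (hb : b = cross t n) : dot b (cross v n) = dot t v := by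
  have hnn : n 0 ^ 2 + n 1 ^ 2 + n 2 ^ 2 = 1 := by
    have h := EuclideanSpace.real_norm_sq_eq n
    rw [hn, Fin.sum_univ_three] at h
    linarith
  subst hb
  simp only [dot, Fin.sum_univ_three] at htn
  simp [dot, cross, Fin.sum_univ_three]
  -- Lagrange's identity: `(t × n)·(v × n) = (t·v)(n·n) - (t·n)(n·v)`.
  linear_combination (t 0 * v 0 + t 1 * v 1 + t 2 * v 2) * hnn
    - (n 0 * v 0 + n 1 * v 1 + n 2 * v 2) * htn

/-- J = β(b − ηn) satisfies the Jacobi identity iff η satisfies the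
Riccati equation ∂ₛη = Ωᵦ − η Ωₙᵦ + η² Ωₙ. -/
theorem jacobi_iff_riccati_eta
    (U : Set E3) (hU : IsOpen U) (t n b : E3 → E3)
    (hframe : IsFrameOn t n b U)
    (β η : E3 → ℝ)
    (hβ : ContDiffOn ℝ (⊤ : ℕ∞) β U) (hη : ContDiffOn ℝ (⊤ : ℕ∞) η U)
    (hβ0 : ∀ x ∈ U, β x ≠ 0) :
    (∀ x ∈ U, dot (β x • (b x - η x • n x))
        (curl (fun y => β y • (b y - η y • n y)) x) = 0)
      ↔ (∀ x ∈ U, ds t η x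
          = hel b x - η x * crossHel n b x + η x ^ 2 * hel n x) := by
  obtain ⟨-, hn, hb, hF⟩ := hframe
  refine forall₂_congr fun x hx => ?_
  have hxU := hU.mem_nhds hx
  have diff {V : Type} [NormedAddCommGroup V] [NormedSpace ℝ V] {f : E3 → V}
      (hf : ContDiffOn ℝ (⊤ : ℕ∞) f U) : DifferentiableAt ℝ f x :=
    (hf.contDiffAt hxU).differentiableAt (by simp)
  obtain ⟨-, hn1, -, htn, -, -, hbx⟩ := hF x hx
  have key := dot_curl_smul (diff hβ) ((diff hb).sub ((diff hη).smul (diff hn)))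
  have key2 := dot_curl_sub_smul (diff hη) (diff hn) (diff hb)
  rw [triple_eq_ds _ hn1 htn hbx] at key2
  change dot (β x • (b x - η x • n x)) (curl (fun y => β y • (b y - η y • n y)) x) =
    β x ^ 2 * dot (b x - η x • n x) (curl (fun y => b y - η y • n y) x) at key
  rw [key, key2, mul_eq_zero, or_iff_right (pow_ne_zero 2 (hβ0 x hx)), sub_eq_zero, eq_comm]
  rfl
end
end

section
/- Let (t, n, b) be a smooth right-handed orthonormal frame on an open set U ⊆ ℝ³, let α be smooth and nowhere zero, μ smooth, J = α(n + μb), let H be a smooth scalar function and v a smooth nowhere-zero vector field on U with v = J × ∇H and t = v/‖v‖. Then at every point of U: b = ‖v‖⁻¹ (α∇H − (n·∇H) J) and n = −‖v‖⁻¹ (αμ∇H − (b·∇H) J). -/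
/-!
The identities are pointwise. Since `b = t × n` and `n = -(t × b)` in a right-handed orthonormal
frame, substituting `t = ‖v‖⁻¹ (J × ∇H)` and expanding the double cross product by
`(J × ∇H) × w = (J·w) ∇H - (∇H·w) J` (`cross_cross_left`) gives both formulas, because
`J·n = α` and `J·b = αμ` for `J = α(n + μb)`.
-/

noncomputable section

theorem cross_cross_left (u v w : E3) :
    cross (cross u v) w = dot u w • v - dot v w • u := by
  ext i
  fin_cases i <;> simp [cross, dot, Fin.sum_univ_three] <;> ring

theorem cross_cross_right (u v w : E3) :
    cross u (cross v w) = dot u w • v - dot u v • w := by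
  ext i
  fin_cases i <;> simp [cross, dot, Fin.sum_univ_three] <;> ring

theorem cross_smul_left (c : ℝ) (u v : E3) : cross (c • u) v = c • cross u v := by
  ext i
  fin_cases i <;> simp [cross] <;> ring

theorem dot_comm (u v : E3) : dot u v = dot v u := by
  simp only [dot, mul_comm]

theorem dot_smul_add_smul (a m : ℝ) (u v w : E3) :
    dot (a • (u + m • v)) w = a * (dot u w + m * dot v w) := by
  simp [dot, Fin.sum_univ_three]
  ring

theorem dot_self_of_norm_one {u : E3} (h : ‖u‖ = 1) : dot u u = 1 := by
  have h2 := EuclideanSpace.real_norm_sq_eq u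
  rw [h] at h2
  simp only [dot, ← pow_two]
  linarith

/-- from v = J × ∇H with J = α(n + μb) and t = v/‖v‖ one obtains
b = ‖v‖⁻¹(α∇H − (n·∇H)J) and n = −‖v‖⁻¹(αμ∇H − (b·∇H)J). -/
theorem frame_vectors_from_hamiltonian
    (U : Set E3) (hU : IsOpen U) (t n b : E3 → E3)
    (hframe : IsFrameOn t n b U)
    (α μ : E3 → ℝ)
    (hα : ContDiffOn ℝ (⊤ : ℕ∞) α U) (hμ : ContDiffOn ℝ (⊤ : ℕ∞) μ U)
    (hα0 : ∀ x ∈ U, α x ≠ 0)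
    (H : E3 → ℝ) (hH : ContDiffOn ℝ (⊤ : ℕ∞) H U)
    (v : E3 → E3) (hv : ContDiffOn ℝ (⊤ : ℕ∞) v U) (hv0 : ∀ x ∈ U, v x ≠ 0)
    (hham : ∀ x ∈ U, v x = cross (α x • (n x + μ x • b x)) (grad H x))
    (ht : ∀ x ∈ U, t x = ‖v x‖⁻¹ • v x) :
    ∀ x ∈ U,
      b x = ‖v x‖⁻¹ •
          (α x • grad H x - dot (n x) (grad H x) • (α x • (n x + μ x • b x))) ∧
      n x = -(‖v x‖⁻¹ •
          ((α x * μ x) • grad H x - dot (b x) (grad H x) • (α x • (n x + μ x • b x)))) := by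
  intro x hx
  obtain ⟨htt, hnn, hbb, htn, -, hnb, hb⟩ := hframe.2.2.2 x hx
  replace htt := dot_self_of_norm_one htt
  replace hnn := dot_self_of_norm_one hnn
  replace hbb := dot_self_of_norm_one hbb
  have hn : n x = -cross (t x) (b x) := by
    rw [hb, cross_cross_right, htn, htt]
    simp
  have hbn : dot (b x) (n x) = 0 := by rw [dot_comm, hnb]
  have key : ∀ w : E3, cross (t x) w = ‖v x‖⁻¹ •
      ((α x * (dot (n x) w + μ x * dot (b x) w)) • grad H x
        - dot w (grad H x) • (α x • (n x + μ x • b x))) := by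
    intro w
    -- `‖v x‖` stays folded: only the vector `v x` is expanded
    generalize hr : ‖v x‖⁻¹ = r
    rw [ht x hx, hr, hham x hx, cross_smul_left, cross_cross_left, dot_smul_add_smul,
      dot_comm (grad H x) w]
  constructor
  · have h := key (n x)
    rw [← hb, hnn, hbn] at h
    simpa using h
  · have h := key (b x)
    rw [hnb, hbb, zero_add, mul_one] at h
    rw [← h]
    exact hn
end
end

section
/- Let (t, n, b) be a smooth right-handed orthonormal frame on an open set U ⊆ ℝ³, let α be smooth and nowhere zero, μ smooth with ∂_s μ = Ω_n + μ Ω_nb + μ² Ω_b on U (so that J = α(n + μb) is a Poisson vector), let H be a smooth scalar function and v a smooth nowhere-zero vector field with v = J × ∇H and t = v/‖v‖. Then at every point of U: ∂_s ln(‖v‖/α) − n·(curl b) = μ Ω_b. -/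
/-!
Since `v · ∇H = 0`, the function `H` is constant along `t`, and `v = J × ∇H` says that
`‖v‖ / α = g` with `g = b(H) - μ n(H)`, where `w(H) = w · ∇H`. Because `t(H) = 0`, the derivative of
`w(H)` along `t` is `[t, w](H)` (`fderiv_fderiv_apply`), and by orthonormality the components of
`[t, n]` and `[t, b]` along `n` and `b` are entries of the curls of `n` and `b` (`dot_curl_cross`):
`∂ₛ b(H) = Ω_n n(H) + (n · curl b) b(H)` and `∂ₛ n(H) = -(b · curl n) n(H) - Ω_b b(H)`.
Substituting the Riccati equation for `∂ₛ μ` gives `∂ₛ g = (n · curl b + μ Ω_b) g`, which is the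
claim after division by `g ≠ 0`.
-/

noncomputable section

theorem dot_eq_inner (u v : E3) : dot u v = inner ℝ u v := by
  simp [dot, PiLp.inner_apply, mul_comm]

theorem dot_grad (f : E3 → ℝ) (x w : E3) : dot w (grad f x) = fderiv ℝ f x w := by
  have hw : w = w 0 • EuclideanSpace.single 0 1 + w 1 • EuclideanSpace.single 1 1
      + w 2 • EuclideanSpace.single 2 (1 : ℝ) := by
    ext i; fin_cases i <;> simp
  conv_rhs => rw [hw]
  simp only [map_add, map_smul]
  simp [dot, grad, pd, Fin.sum_univ_three]

/-- Differentiating an orthogonality relation moves a derivative from one factor to the other. -/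
theorem fderiv_dot_eq_zero {F G : E3 → E3} {x : E3} (hF : DifferentiableAt ℝ F x)
    (hG : DifferentiableAt ℝ G x) (h : ∀ᶠ y in nhds x, dot (F y) (G y) = 0) (w : E3) :
    dot (fderiv ℝ F x w) (G x) = - dot (F x) (fderiv ℝ G x w) := by
  have h1 : (fun y => inner ℝ (F y) (G y)) =ᶠ[nhds x] fun _ => (0 : ℝ) := by
    filter_upwards [h] with y hy
    rw [← dot_eq_inner, hy]
  have h2 := fderiv_inner_apply ℝ hF hG w
  rw [h1.fderiv_eq] at h2
  simp only [← dot_eq_inner] at h2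
  simp at h2
  linarith

/-- The curl measures the antisymmetric part of the Jacobian. -/
theorem dot_curl_cross {F : E3 → E3} {x : E3} (hF : DifferentiableAt ℝ F x) (u w : E3) :
    dot (curl F x) (cross u w) = dot (fderiv ℝ F x u) w - dot (fderiv ℝ F x w) u := by
  have hc : ∀ (i : Fin 3) (z : E3), (fderiv ℝ F x z) i
      = dot z (grad (fun y => F y i) x) := by
    intro i z
    rw [dot_grad]
    have := (EuclideanSpace.proj (𝕜 := ℝ) i).hasFDerivAt.comp x hF.hasFDerivAt
    rw [show (fun y => F y i) = (EuclideanSpace.proj (𝕜 := ℝ) i) ∘ F from rfl, this.fderiv]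
    simp
  rw [dot, dot, dot]
  simp only [Fin.sum_univ_three, hc]
  simp [dot, grad, curl, cross, Fin.sum_univ_three]
  ring

theorem cross_cross_self {t n b : E3} (ht : dot t t = 1) (htn : dot t n = 0)
    (hb : b = cross t n) : cross b t = n := by
  subst hb
  simp only [dot, Fin.sum_univ_three] at ht htn
  ext i
  fin_cases i <;> simp [cross]
  · linear_combination n 0 * ht - t 0 * htn
  · linear_combination n 1 * ht - t 1 * htn
  · linear_combination n 2 * ht - t 2 * htn

theorem dot_cross_eq_cross_dot (u w z : E3) : dot u (cross w z) = dot (cross u w) z := by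
  simp [dot, cross, Fin.sum_univ_three]
  ring

/-- Expansion of a vector in an orthonormal frame. -/
theorem frame_expand {t n b : E3} (htt : dot t t = 1) (hnn : dot n n = 1) (hbb : dot b b = 1)
    (htn : dot t n = 0) (htb : dot t b = 0) (hnb : dot n b = 0) (w : E3) :
    w = dot w t • t + dot w n • n + dot w b • b := by
  simp only [dot, Fin.sum_univ_three] at *
  have hM : !![t 0, t 1, t 2; n 0, n 1, n 2; b 0, b 1, b 2]
      * !![t 0, n 0, b 0; t 1, n 1, b 1; t 2, n 2, b 2] = (1 : Matrix (Fin 3) (Fin 3) ℝ) := by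
    ext i j
    fin_cases i <;> fin_cases j <;> simp [Matrix.mul_apply, Fin.sum_univ_three] <;> linarith
  -- A one-sided inverse of a square matrix is two-sided, so the columns are orthonormal as well.
  rw [mul_eq_one_comm] at hM
  have e : ∀ i j, _ := fun i j => congrFun (congrFun hM i) j
  have e00 := e 0 0
  have e01 := e 0 1
  have e02 := e 0 2
  have e11 := e 1 1
  have e12 := e 1 2
  have e22 := e 2 2
  simp [Matrix.mul_apply, Fin.sum_univ_three] at e00 e01 e02 e11 e12 e22
  ext i
  fin_cases i <;> simp
  · linear_combination -w 0 * e00 - w 1 * e01 - w 2 * e02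
  · linear_combination -w 0 * e01 - w 1 * e11 - w 2 * e12
  · linear_combination -w 0 * e02 - w 1 * e12 - w 2 * e22

/-- The commutator identity `t(w H) = [t, w] H` for a function `H` that is constant along `t`. -/
theorem fderiv_fderiv_apply {H : E3 → ℝ} {t w : E3 → E3} {x : E3} (hH : ContDiffAt ℝ 2 H x)
    (ht : DifferentiableAt ℝ t x) (hw : DifferentiableAt ℝ w x)
    (h0 : ∀ᶠ y in nhds x, fderiv ℝ H y (t y) = 0) :
    DifferentiableAt ℝ (fun y => fderiv ℝ H y (w y)) x ∧
    fderiv ℝ (fun y => fderiv ℝ H y (w y)) x (t x)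
      = fderiv ℝ H x (fderiv ℝ w x (t x) - fderiv ℝ t x (w x)) := by
  have hd : DifferentiableAt ℝ (fderiv ℝ H) x :=
    (hH.fderiv_right (m := 1) (by norm_num)).differentiableAt (by norm_num)
  refine ⟨hd.clm_apply hw, ?_⟩
  have hs : IsSymmSndFDerivAt ℝ H x := hH.isSymmSndFDerivAt (by simp)
  have h1 : fderiv ℝ (fun y => fderiv ℝ H y (t y)) x (w x) = 0 := by
    have : (fun y => fderiv ℝ H y (t y)) =ᶠ[nhds x] fun _ => (0 : ℝ) := h0
    rw [this.fderiv_eq]; simp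
  rw [fderiv_clm_apply hd ht] at h1
  rw [fderiv_clm_apply hd hw]
  simp at h1 ⊢
  rw [hs.eq (t x) (w x)]
  linarith

/-- for a Poisson vector J = α(n + μb) of a Hamiltonian structure,
∂ₛ ln(‖v‖/α) − n·(curl b) = μ Ωᵦ. -/
theorem hamiltonian_implies_log_relation
    (U : Set E3) (hU : IsOpen U) (t n b : E3 → E3)
    (hframe : IsFrameOn t n b U)
    (α μ : E3 → ℝ)
    (hα : ContDiffOn ℝ (⊤ : ℕ∞) α U) (hμ : ContDiffOn ℝ (⊤ : ℕ∞) μ U)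
    (hα0 : ∀ x ∈ U, α x ≠ 0)
    (hric : ∀ x ∈ U, ds t μ x = hel n x + μ x * crossHel n b x + μ x ^ 2 * hel b x)
    (H : E3 → ℝ) (hH : ContDiffOn ℝ (⊤ : ℕ∞) H U)
    (v : E3 → E3) (hv : ContDiffOn ℝ (⊤ : ℕ∞) v U) (hv0 : ∀ x ∈ U, v x ≠ 0)
    (hham : ∀ x ∈ U, v x = cross (α x • (n x + μ x • b x)) (grad H x))
    (ht : ∀ x ∈ U, t x = ‖v x‖⁻¹ • v x) :
    ∀ x ∈ U,
      ds t (fun y => Real.log (‖v y‖ / α y)) x - dot (n x) (curl b x)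
        = μ x * hel b x := by
  obtain ⟨hts, hns, hbs, hfr⟩ := hframe
  have one_of_norm : ∀ w : E3, ‖w‖ = 1 → dot w w = 1 := fun w hw => by
    rw [dot_eq_inner, real_inner_self_eq_norm_sq, hw, one_pow]
  have hvt : ∀ y ∈ U, v y = ‖v y‖ • t y := fun y hy => by
    rw [ht y hy, smul_smul, mul_inv_cancel₀ (norm_ne_zero_iff.2 (hv0 y hy)), one_smul]
  -- `H` is a first integral of `t`, because `v · ∇H` is a triple product with a repeated factor.
  have hHt : ∀ y ∈ U, fderiv ℝ H y (t y) = 0 := fun y hy => by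
    have h1 : fderiv ℝ H y (v y) = 0 := by
      rw [← dot_grad, hham y hy]
      simp [dot, cross, Fin.sum_univ_three]
      ring
    rw [ht y hy, map_smul, h1, smul_zero]
  -- `‖v‖ = t · (J × ∇H) = (t × J) · ∇H`, and `t × J = α (b - μ n)`.
  have hg : ∀ y ∈ U, ‖v y‖ / α y = fderiv ℝ H y (b y) - μ y * fderiv ℝ H y (n y) := by
    intro y hy
    obtain ⟨t1, n1, b1, tn, tb, nb, hb⟩ := hfr y hy
    have hbt := cross_cross_self (one_of_norm _ t1) tn hb
    have h1 : dot (t y) (v y) = ‖v y‖ := by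
      rw [hvt y hy, dot_eq_inner, inner_smul_right, ← dot_eq_inner, one_of_norm _ t1, mul_one,
        ← hvt y hy]
    have h2 : cross (t y) (α y • (n y + μ y • b y)) = α y • (b y - μ y • n y) := by
      have h3 : cross (t y) (α y • (n y + μ y • b y))
          = α y • (cross (t y) (n y) - μ y • cross (b y) (t y)) := by
        ext i
        fin_cases i <;> simp [cross] <;> ring
      rw [h3, hbt, ← hb]
    rw [hham y hy, dot_cross_eq_cross_dot, h2, dot_grad, ← hham y hy] at h1
    rw [← h1]
    simp only [map_smul, map_sub, smul_eq_mul]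
    field_simp [hα0 y hy]
  intro x hx
  have hUx : U ∈ nhds x := hU.mem_nhds hx
  have ev : ∀ {P : E3 → Prop}, (∀ y ∈ U, P y) → ∀ᶠ y in nhds x, P y := fun h => by
    filter_upwards [hUx] with y hy using h y hy
  have dt : DifferentiableAt ℝ t x := (hts.contDiffAt hUx).differentiableAt (by simp)
  have dn : DifferentiableAt ℝ n x := (hns.contDiffAt hUx).differentiableAt (by simp)
  have db : DifferentiableAt ℝ b x := (hbs.contDiffAt hUx).differentiableAt (by simp)
  have dμ : DifferentiableAt ℝ μ x := (hμ.contDiffAt hUx).differentiableAt (by simp)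
  have cH : ContDiffAt ℝ 2 H x := (hH.contDiffAt hUx).of_le (WithTop.coe_le_coe.2 (le_top : (2 : ℕ∞) ≤ ⊤))
  obtain ⟨t1, n1, b1, tn, tb, nb, hb⟩ := hfr x hx
  have tt := one_of_norm _ t1
  have nn := one_of_norm _ n1
  have bb := one_of_norm _ b1
  have hbt := cross_cross_self tt tn hb
  obtain ⟨db', eb⟩ := fderiv_fderiv_apply cH dt db (ev hHt)
  obtain ⟨dn', en⟩ := fderiv_fderiv_apply cH dt dn (ev hHt)
  -- Since `∂ₛ H = 0`, only the normal components of the commutators matter.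
  have expand : ∀ w, fderiv ℝ H x w
      = dot w (n x) * fderiv ℝ H x (n x) + dot w (b x) * fderiv ℝ H x (b x) := fun w => by
    conv_lhs => rw [frame_expand tt nn bb tn tb nb w]
    simp [hHt x hx]
  have comm : ∀ u w : E3, dot u w = dot w u := fun u w => by
    simp only [dot_eq_inner, real_inner_comm]
  have sub_dot : ∀ u w z : E3, dot (u - w) z = dot u z - dot w z := fun u w z => by
    simp only [dot_eq_inner, inner_sub_left]
  have unit_dot : ∀ F : E3 → E3, DifferentiableAt ℝ F x → (∀ y ∈ U, ‖F y‖ = 1) →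
      ∀ w, dot (fderiv ℝ F x w) (F x) = 0 := by
    intro F dF hF w
    have h1 : (fun y => inner ℝ (F y) (F y)) =ᶠ[nhds x] fun _ => (1 : ℝ) := by
      filter_upwards [hUx] with y hy
      rw [← dot_eq_inner, one_of_norm _ (hF y hy)]
    have h2 := fderiv_inner_apply ℝ dF dF w
    rw [h1.fderiv_eq] at h2
    simp only [← dot_eq_inner, comm (F x)] at h2
    simp at h2
    linarith
  have rn := dot_curl_cross dn (b x) (t x)
  have rb := dot_curl_cross db (b x) (t x)
  have sn := dot_curl_cross dn (t x) (n x)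
  have sb := dot_curl_cross db (t x) (n x)
  rw [hbt, comm] at rn rb
  rw [← hb, comm] at sn sb
  have tn' := fderiv_dot_eq_zero dt dn (ev fun y hy => (hfr y hy).2.2.2.1)
  have tb' := fderiv_dot_eq_zero dt db (ev fun y hy => (hfr y hy).2.2.2.2.1)
  have nb' := fderiv_dot_eq_zero dn db (ev fun y hy => (hfr y hy).2.2.2.2.2.1)
  have nn' := unit_dot n dn fun y hy => (hfr y hy).2.1
  have bb' := unit_dot b db fun y hy => (hfr y hy).2.2.1
  have c1 : dot (fderiv ℝ b x (t x) - fderiv ℝ t x (b x)) (n x) = hel n x := by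
    rw [sub_dot, hel, rn, tn', comm (t x), comm _ (n x)]
    linarith [nb' (t x)]
  have c2 : dot (fderiv ℝ b x (t x) - fderiv ℝ t x (b x)) (b x) = dot (n x) (curl b x) := by
    rw [sub_dot, rb, tb', comm (t x), bb']
    linarith [bb' (t x)]
  have c3 : dot (fderiv ℝ n x (t x) - fderiv ℝ t x (n x)) (n x) = - dot (b x) (curl n x) := by
    rw [sub_dot, sn, tn', comm (t x), nn']
    linarith [nn' (t x)]
  have c4 : dot (fderiv ℝ n x (t x) - fderiv ℝ t x (n x)) (b x) = - hel b x := by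
    rw [sub_dot, hel, sb, tb', comm (t x), nb', comm (n x)]
    ring
  rw [expand, c1, c2] at eb
  rw [expand, c3, c4] at en
  have hric := hric x hx
  rw [ds, dot_grad, crossHel] at hric
  have hgx := hg x hx
  have hg0 : fderiv ℝ H x (b x) - μ x * fderiv ℝ H x (n x) ≠ 0 := by
    rw [← hgx]
    exact div_ne_zero (norm_ne_zero_iff.2 (hv0 x hx)) (hα0 x hx)
  have hlog : (fun y => Real.log (‖v y‖ / α y)) =ᶠ[nhds x]
      fun y => Real.log (fderiv ℝ H y (b y) - μ y * fderiv ℝ H y (n y)) := by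
    filter_upwards [hUx] with y hy
    rw [hg y hy]
  have hder := ((db'.hasFDerivAt.sub (dμ.hasFDerivAt.mul dn'.hasFDerivAt)).log hg0).fderiv
  rw [ds, dot_grad, hlog.fderiv_eq]
  simp only [Pi.sub_apply, Pi.mul_apply] at hder
  rw [hder]
  simp only [_root_.smul_apply, _root_.sub_apply,
    _root_.add_apply, smul_eq_mul, eb, en, hric]
  rw [sub_eq_iff_eq_add, inv_mul_eq_iff_eq_mul₀ hg0]
  ring
end
end

section
/- Let (t, n, b) be a smooth right-handed orthonormal frame on an open set U ⊆ ℝ³ with Ω_n = 0 and Ω_b = 0 identically on U (so both n and b are Poisson vectors). Suppose there are smooth scalar functions H₁, H₂ and a smooth nowhere-zero vector field v on U with v = n × ∇H₂, v = b × ∇H₁ and t = v/‖v‖. Then the compatibility condition Ω_nb = n·(curl b) + b·(curl n) = 0 holds on U, i.e., n and b are compatible Poisson vectors. -/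
/-!
Put `w = ‖v‖`, so that `v = w t`. Since `(n × g) × n = g - (n·g) n`, the two Hamiltonian
representations of `v` determine the gradients up to the component along the Poisson vector:
`∇H₂ = α n + w b` and `∇H₁ = c b - w n` with `α = n·∇H₂` and `c = b·∇H₁`.
Taking the curl of the first and dotting with `n` gives, because `n·curl n = 0`,
`w n·curl b = ∇w·(n × b)`; taking the curl of the second and dotting with `b` gives, because
`b·curl b = 0`, `w b·curl n = -∇w·(n × b)`. The sum vanishes and `w ≠ 0`.
The lemma `mul_dot_curl_eq` carries the differential identity, `eq_of_cross_eq` the pointwise one.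
-/


noncomputable section

@[simp] lemma cross_zero (u v : E3) : cross u v 0 = u 1 * v 2 - u 2 * v 1 := rfl
@[simp] lemma cross_one (u v : E3) : cross u v 1 = u 2 * v 0 - u 0 * v 2 := rfl
@[simp] lemma cross_two (u v : E3) : cross u v 2 = u 0 * v 1 - u 1 * v 0 := rfl

lemma grad_apply (f : E3 → ℝ) (x : E3) (i : Fin 3) : grad f x i = pd i f x := by
  fin_cases i <;> rfl

lemma curl_zero (F : E3 → E3) (x : E3) :
    curl F x 0 = pd 1 (fun y => F y 2) x - pd 2 (fun y => F y 1) x := rfl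
lemma curl_one (F : E3 → E3) (x : E3) :
    curl F x 1 = pd 2 (fun y => F y 0) x - pd 0 (fun y => F y 2) x := rfl
lemma curl_two (F : E3 → E3) (x : E3) :
    curl F x 2 = pd 0 (fun y => F y 1) x - pd 1 (fun y => F y 0) x := rfl

lemma dot_eq (u v : E3) : dot u v = u 0 * v 0 + u 1 * v 1 + u 2 * v 2 := by
  simp [dot, Fin.sum_univ_three]

lemma dot_self_eq_norm_sq (u : E3) : dot u u = ‖u‖ ^ 2 := by
  rw [dot_eq, EuclideanSpace.norm_sq_eq, Fin.sum_univ_three]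
  simp [sq]

/-- Recovering `g` from `n × g = w t` and `n·g`, via `(n × g) × n = (n·n) g - (n·g) n`. -/
lemma eq_of_cross_eq {n g t : E3} {w : ℝ} (hn : dot n n = 1) (h : cross n g = w • t)
    (i : Fin 3) : g i = dot n g * n i + w * cross t n i := by
  have h0 := congrArg (fun u : E3 => u 0) h
  have h1 := congrArg (fun u : E3 => u 1) h
  have h2 := congrArg (fun u : E3 => u 2) h
  simp only [cross_zero, cross_one, cross_two, PiLp.smul_apply, smul_eq_mul] at h0 h1 h2
  rw [dot_eq] at hn
  fin_cases i <;>
    simp only [Fin.zero_eta, Fin.mk_one, Fin.reduceFinMk, cross_zero, cross_one, cross_two, dot_eq]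
  · linear_combination (-g 0) * hn + n 2 * h1 - n 1 * h2
  · linear_combination (-g 1) * hn + n 0 * h2 - n 2 * h0
  · linear_combination (-g 2) * hn + n 1 * h0 - n 0 * h1

/-- In an orthonormal frame with `b = t × n`, also `t × b = -n`. -/
lemma cross_frame {t n b : E3} (ht : dot t t = 1) (htn : dot t n = 0) (hb : b = cross t n)
    (i : Fin 3) : cross t b i = -n i := by
  subst hb
  rw [dot_eq] at ht htn
  fin_cases i <;>
    simp only [Fin.zero_eta, Fin.mk_one, Fin.reduceFinMk, cross_zero, cross_one, cross_two]
  · linear_combination t 0 * htn - n 0 * ht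
  · linear_combination t 1 * htn - n 1 * ht
  · linear_combination t 2 * htn - n 2 * ht

lemma differentiableAt_pd {H : E3 → ℝ} {x : E3} (hH : ContDiffAt ℝ 2 H x) (i : Fin 3) :
    DifferentiableAt ℝ (pd i H) x := by
  have h : DifferentiableAt ℝ (fderiv ℝ H) x :=
    (hH.fderiv_right (m := 1) (by norm_num)).differentiableAt (by norm_num)
  unfold pd
  fun_prop

lemma pd_pd_comm {H : E3 → ℝ} {x : E3} (hH : ContDiffAt ℝ 2 H x) (i j : Fin 3) :
    pd i (pd j H) x = pd j (pd i H) x := by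
  have h : DifferentiableAt ℝ (fderiv ℝ H) x :=
    (hH.fderiv_right (m := 1) (by norm_num)).differentiableAt (by norm_num)
  have key : ∀ i j : Fin 3, pd i (pd j H) x =
      fderiv ℝ (fderiv ℝ H) x (EuclideanSpace.single i 1) (EuclideanSpace.single j 1) := by
    intro i j
    unfold pd
    rw [fderiv_clm_apply h (differentiableAt_const _)]
    simp
  rw [key, key]
  exact (hH.isSymmSndFDerivAt (by simp)).eq _ _

/-- The `n`-component of `curl (α n + w b) = curl ∇H = 0`. -/
lemma mul_dot_curl_eq {H α w : E3 → ℝ} {n b : E3 → E3} {x : E3} (hH : ContDiffAt ℝ 2 H x)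
    (hα : DifferentiableAt ℝ α x) (hw : DifferentiableAt ℝ w x)
    (hn : DifferentiableAt ℝ n x) (hb : DifferentiableAt ℝ b x)
    (h : ∀ᶠ y in nhds x, ∀ i, grad H y i = α y * n y i + w y * b y i) :
    α x * hel n x + w x * dot (n x) (curl b x) = dot (grad w x) (cross (n x) (b x)) := by
  have hni : ∀ i, DifferentiableAt ℝ (fun y => n y i) x := differentiableAt_euclidean.1 hn
  have hbi : ∀ i, DifferentiableAt ℝ (fun y => b y i) x := differentiableAt_euclidean.1 hb
  have key : ∀ i j, pd j (pd i H) x = α x * pd j (fun y => n y i) x + n x i * pd j α x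
      + (w x * pd j (fun y => b y i) x + b x i * pd j w x) := by
    intro i j
    have he : pd i H =ᶠ[nhds x] fun y => α y * n y i + w y * b y i := by
      filter_upwards [h] with y hy
      rw [← hy i, grad_apply]
    rw [pd, he.fderiv_eq, fderiv_fun_add (hα.fun_mul (hni i)) (hw.fun_mul (hbi i)),
      fderiv_fun_mul hα (hni i), fderiv_fun_mul hw (hbi i)]
    simp [pd]
  have e01 := pd_pd_comm hH 0 1
  have e12 := pd_pd_comm hH 1 2
  have e20 := pd_pd_comm hH 2 0
  simp only [key] at e01 e12 e20
  simp only [hel, dot_eq, curl_zero, curl_one, curl_two, cross_zero, cross_one, cross_two,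
    grad_apply]
  linear_combination n x 0 * e12 + n x 1 * e20 + n x 2 * e01

/-- if Ωₙ = Ωᵦ = 0 and v = n × ∇H₂ = b × ∇H₁ with t = v/‖v‖, then
Ωₙᵦ = 0, i.e. n and b are compatible Poisson vectors. -/
theorem normal_binormal_compatible
    (U : Set E3) (hU : IsOpen U) (t n b : E3 → E3)
    (hframe : IsFrameOn t n b U)
    (hΩn : ∀ x ∈ U, hel n x = 0) (hΩb : ∀ x ∈ U, hel b x = 0)
    (H₁ H₂ : E3 → ℝ)
    (hH₁ : ContDiffOn ℝ (⊤ : ℕ∞) H₁ U) (hH₂ : ContDiffOn ℝ (⊤ : ℕ∞) H₂ U)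
    (v : E3 → E3) (hv : ContDiffOn ℝ (⊤ : ℕ∞) v U) (hv0 : ∀ x ∈ U, v x ≠ 0)
    (hham₂ : ∀ x ∈ U, v x = cross (n x) (grad H₂ x))
    (hham₁ : ∀ x ∈ U, v x = cross (b x) (grad H₁ x))
    (ht : ∀ x ∈ U, t x = ‖v x‖⁻¹ • v x) :
    ∀ x ∈ U, crossHel n b x = 0 := by
  intro x hx
  obtain ⟨hts, hns, hbs, hfr⟩ := hframe
  have hnhds : U ∈ nhds x := hU.mem_nhds hx
  have hdiff : ∀ F : E3 → E3, ContDiffOn ℝ (⊤ : ℕ∞) F U → DifferentiableAt ℝ F x :=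
    fun F hF => (hF.contDiffAt hnhds).differentiableAt (by simp)
  have hdot : ∀ F G : E3 → E3, (∀ i, DifferentiableAt ℝ (fun y => F y i) x) →
      (∀ i, DifferentiableAt ℝ (fun y => G y i) x) →
      DifferentiableAt ℝ (fun y => dot (F y) (G y)) x := by
    intro F G hF hG
    simp only [dot_eq]
    exact (((hF 0).mul (hG 0)).add ((hF 1).mul (hG 1))).add ((hF 2).mul (hG 2))
  have hC2 : ∀ H : E3 → ℝ, ContDiffOn ℝ (⊤ : ℕ∞) H U → ContDiffAt ℝ 2 H x :=
    fun H hH => (hH.contDiffAt hnhds).of_le (WithTop.coe_le_coe.2 (le_top : (2 : ℕ∞) ≤ ⊤))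
  have hgrad : ∀ H : E3 → ℝ, ContDiffOn ℝ (⊤ : ℕ∞) H U →
      ∀ i, DifferentiableAt ℝ (fun y => grad H y i) x := by
    intro H hH i
    simp only [grad_apply]
    exact differentiableAt_pd (hC2 H hH) i
  have hn := hdiff n hns
  have hb := hdiff b hbs
  have hni := differentiableAt_euclidean.1 hn
  have hbi := differentiableAt_euclidean.1 hb
  have hw : DifferentiableAt ℝ (fun y => ‖v y‖) x := (hdiff v hv).norm ℝ (hv0 x hx)
  have hvt : ∀ y ∈ U, v y = ‖v y‖ • t y := by
    intro y hy
    rw [ht y hy, smul_smul, mul_inv_cancel₀ (norm_ne_zero_iff.2 (hv0 y hy)), one_smul]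
  have hg₂ : ∀ᶠ y in nhds x, ∀ i,
      grad H₂ y i = dot (n y) (grad H₂ y) * n y i + ‖v y‖ * b y i := by
    filter_upwards [hnhds] with y hy i
    obtain ⟨-, hn1, -, -, -, -, hbc⟩ := hfr y hy
    rw [hbc]
    exact eq_of_cross_eq (by rw [dot_self_eq_norm_sq, hn1]; norm_num)
      ((hham₂ y hy).symm.trans (hvt y hy)) i
  have hg₁ : ∀ᶠ y in nhds x, ∀ i,
      grad H₁ y i = dot (b y) (grad H₁ y) * b y i + (-‖v y‖) * n y i := by
    filter_upwards [hnhds] with y hy i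
    obtain ⟨ht1, -, hb1, htn, -, -, hbc⟩ := hfr y hy
    have h := eq_of_cross_eq (by rw [dot_self_eq_norm_sq, hb1]; norm_num)
      ((hham₁ y hy).symm.trans (hvt y hy)) i
    rw [cross_frame (by rw [dot_self_eq_norm_sq, ht1]; norm_num) htn hbc] at h
    rw [h]
    ring
  have E₂ := mul_dot_curl_eq (hC2 H₂ hH₂) (hdot n _ hni (hgrad H₂ hH₂)) hw hn hb hg₂
  have E₁ := mul_dot_curl_eq (w := fun y => -‖v y‖) (hC2 H₁ hH₁)
    (hdot b _ hbi (hgrad H₁ hH₁)) hw.neg hb hn hg₁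
  rw [hΩn x hx] at E₂
  rw [hΩb x hx] at E₁
  have hneg : ∀ i, pd i (fun y => -‖v y‖) x = -pd i (fun y => ‖v y‖) x := by
    intro i
    simp [pd, fderiv_fun_neg]
  rw [dot_eq (grad _ x)] at E₁ E₂
  simp only [grad_apply, hneg, cross_zero, cross_one, cross_two] at E₁ E₂
  refine (mul_eq_zero.1 ?_).resolve_left (norm_ne_zero_iff.2 (hv0 x hx))
  rw [crossHel]
  linear_combination E₂ - E₁
end
end

section
/- Let (t, n, b) be a smooth right-handed orthonormal frame on an open set U ⊆ ℝ³, let μ be a smooth scalar function on U, and suppose J = n + μb satisfies the Jacobi identity J·(curl J) = 0 on U. Then for every point x₀ ∈ U there exist an open neighborhood V ⊆ U of x₀ and smooth functions φ, H : V → ℝ with φ nowhere zero on V such that J = φ ∇H on V. -/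
/-!
This is the Frobenius theorem for the nowhere vanishing one-form `J♭ = ⟨J, ·⟩` on `ℝ³`, with
`J♭ ∧ dJ♭ = (J · curl J) vol = 0`. Put `e = n x₀`, so that `⟨J, e⟩ = 1` at `x₀`, and let
`β = J♭ / ⟨J, e⟩` near `x₀`; then `β(e) = 1` and `β ∧ dβ = 0` (`extd_normalized`).

With `x₀` as origin, join `x` to the axis `ℝ e` by the curve `C(s) = (1 - s) x + u(s) e`,
`u(0) = 0`, tangent to `ker β`, i.e. with `u' = β(C) x`, and put `H x = u(1)`. For a variation in
the direction `h`, with variation field `X`, the function `w = β(C)(X)` satisfies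
`w' = dβ(C', X) = -dβ(e, C') w`, where the second equality is `β ∧ dβ = 0` contracted with `e`
and uses `β(C') = 0`. As `w(0) = β(x) h` and `w(1) = dH(x) h`, the differential `dH(x)` is a
nonzero multiple of `β(x)` (`frobenius_normalized`).

The smoothness of `u` in `x` comes from the inverse function theorem in `C([0, 1], ℝ)`
(`exists_smooth_solution`): the integral equation involves a superposition operator, which is smooth
(`contDiff_superpose`), and it degenerates to `u = 0` at `x = 0`, so that its linearization there
in `u` is the identity. Hence no separate small-time argument is needed.
-/


noncomputable section

open scoped ContDiff unitInterval

/-! ### Superposition and integration operators on curves -/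

/-- The pointwise pairing of a continuous family of operators with a continuous curve, as a
continuous linear map from families of operators to operators between curve spaces. -/
def pointwiseApply (F G : Type) [NormedAddCommGroup F] [NormedSpace ℝ F]
    [NormedAddCommGroup G] [NormedSpace ℝ G] :
    C(I, F →L[ℝ] G) →L[ℝ] C(I, F) →L[ℝ] C(I, G) :=
  LinearMap.mkContinuous₂
    (LinearMap.mk₂ ℝ (fun (A : C(I, F →L[ℝ] G)) (u : C(I, F)) =>
        (⟨fun s => A s (u s), by fun_prop⟩ : C(I, G)))
      (fun A B u => by ext s; simp) (fun c A u => by ext s; simp)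
      (fun A u v => by ext s; simp) (fun c A u => by ext s; simp)) 1
    (fun A u => by
      rw [ContinuousMap.norm_le _ (by positivity)]
      intro s
      rw [one_mul]
      exact (A s).le_of_opNorm_le_of_le (A.norm_coe_le_norm s) (u.norm_coe_le_norm s))

lemma pointwiseApply_apply {F G : Type} [NormedAddCommGroup F] [NormedSpace ℝ F]
    [NormedAddCommGroup G] [NormedSpace ℝ G] (A : C(I, F →L[ℝ] G)) (u : C(I, F)) (s : I) :
    pointwiseApply F G A u s = A s (u s) := rfl

/-- The superposition operator `u ↦ g ∘ u` on curves. -/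
def superpose {F G : Type} [NormedAddCommGroup F] [NormedAddCommGroup G] (g : C(F, G))
    (u : C(I, F)) : C(I, G) := g.comp u

/-- The continuous derivative of a `C¹` function, bundled. -/
def fderivMap {F G : Type} [NormedAddCommGroup F] [NormedSpace ℝ F]
    [NormedAddCommGroup G] [NormedSpace ℝ G] {g : F → G} (hg : ContDiff ℝ 1 g) :
    C(F, F →L[ℝ] G) := ⟨fderiv ℝ g, hg.continuous_fderiv (by simp)⟩

lemma hasFDerivAt_superpose {F G : Type} [NormedAddCommGroup F] [NormedSpace ℝ F]
    [NormedAddCommGroup G] [NormedSpace ℝ G] (g : C(F, G)) (hg : ContDiff ℝ 1 g) (u : C(I, F)) :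
    HasFDerivAt (superpose g) (pointwiseApply F G (superpose (fderivMap hg) u)) u := by
  rw [hasFDerivAt_iff_isLittleO_nhds_zero, Asymptotics.isLittleO_iff]
  intro ε hε
  have hc : Continuous (superpose (fderivMap hg)) := ContinuousMap.continuous_postcomp _
  obtain ⟨δ, hδ, hball⟩ := Metric.continuousAt_iff.1 (hc.continuousAt (x := u)) ε hε
  filter_upwards [Metric.ball_mem_nhds (0 : C(I, F)) hδ] with h hh
  rw [ContinuousMap.norm_le _ (by positivity)]
  intro s
  have hhs : ‖h s‖ < δ := lt_of_le_of_lt (h.norm_coe_le_norm s) (by simpa using hh)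
  -- Every point near `u s` lies on a translate of `u`, which is uniformly close to `u`.
  have key : ∀ z ∈ Metric.ball (u s) δ, ‖fderiv ℝ g z - fderiv ℝ g (u s)‖ ≤ ε := by
    intro z hz
    have h1 : dist (u + ContinuousMap.const I (z - u s)) u < δ := by
      rw [dist_eq_norm, add_sub_cancel_left]
      refine lt_of_le_of_lt ((ContinuousMap.norm_le _ (norm_nonneg (z - u s))).2 (by simp)) ?_
      simpa [dist_eq_norm] using hz
    have h2 := (ContinuousMap.norm_coe_le_norm (superpose (fderivMap hg)
      (u + ContinuousMap.const I (z - u s)) - superpose (fderivMap hg) u) s).trans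
      (by simpa [dist_eq_norm] using (hball h1).le)
    simpa [superpose, fderivMap] using h2
  have := (convex_ball (u s) δ).norm_image_sub_le_of_norm_hasFDerivWithin_le'
    (f := g) (f' := fderiv ℝ g) (φ := fderiv ℝ g (u s)) (x := u s) (y := u s + h s)
    (fun z _ => ((hg.differentiable (by simp)) z).hasFDerivAt.hasFDerivWithinAt) key
    (Metric.mem_ball_self hδ) (by simpa [dist_eq_norm] using hhs)
  calc _ ≤ ε * ‖h s‖ := by simpa [superpose, fderivMap, pointwiseApply_apply] using this
    _ ≤ ε * ‖h‖ := by gcongr; exact h.norm_coe_le_norm s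

lemma contDiff_superpose_nat {F : Type} [NormedAddCommGroup F] [NormedSpace ℝ F] (n : ℕ) :
    ∀ {G : Type} [NormedAddCommGroup G] [NormedSpace ℝ G] (g : C(F, G)),
      ContDiff ℝ n g → ContDiff ℝ n (superpose g) := by
  induction n with
  | zero =>
    intro G _ _ g _
    exact contDiff_zero.2 (ContinuousMap.continuous_postcomp g)
  | succ n ih =>
    intro G _ _ g hg
    have hg1 : ContDiff ℝ 1 g := hg.of_le (by exact_mod_cast Nat.le_add_left 1 n)
    refine contDiff_succ_iff_hasFDerivAt.2 ⟨_, ?_, hasFDerivAt_superpose g hg1⟩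
    refine (ContinuousLinearMap.contDiff (F := C(I, F) →L[ℝ] C(I, G)) (pointwiseApply F G)).comp (ih (fderivMap hg1) ?_)
    exact hg.fderiv_right (m := n) (by norm_cast)

/-- The superposition operator of a smooth function is smooth. -/
lemma contDiff_superpose {F G : Type} [NormedAddCommGroup F] [NormedSpace ℝ F]
    [NormedAddCommGroup G] [NormedSpace ℝ G] (g : C(F, G)) (hg : ContDiff ℝ ∞ g) :
    ContDiff ℝ ∞ (superpose g) :=
  contDiff_infty.2 fun n => contDiff_superpose_nat n g (contDiff_infty.1 hg n)

/-- The Volterra operator `u ↦ ∫₀ˢ u`; the curve is extended by constants outside `[0, 1]`. -/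
def volterra : C(I, ℝ) →L[ℝ] C(I, ℝ) :=
  LinearMap.mkContinuous
    { toFun := fun u => ⟨fun s => ∫ τ in (0 : ℝ)..s, Set.IccExtend zero_le_one u τ, by
        have : Continuous (Set.IccExtend (zero_le_one (α := ℝ)) u) := u.continuous.Icc_extend'
        exact (intervalIntegral.continuous_primitive
          (fun a b => this.intervalIntegrable a b) 0).comp continuous_subtype_val⟩
      map_add' := fun u v => by
        ext s
        have hu : Continuous (Set.IccExtend (zero_le_one (α := ℝ)) u) := u.continuous.Icc_extend'
        have hv : Continuous (Set.IccExtend (zero_le_one (α := ℝ)) v) := v.continuous.Icc_extend'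
        exact intervalIntegral.integral_add (hu.intervalIntegrable _ _) (hv.intervalIntegrable _ _)
      map_smul' := fun c u => by
        ext s
        exact intervalIntegral.integral_smul c _ } 1
    (fun u => by
      rw [ContinuousMap.norm_le _ (by positivity)]
      intro s
      have := intervalIntegral.norm_integral_le_of_norm_le_const (a := 0) (b := (s : ℝ)) (C := ‖u‖)
        (f := Set.IccExtend (zero_le_one (α := ℝ)) u) (fun τ _ => u.norm_coe_le_norm _)
      refine this.trans ?_
      rw [sub_zero, abs_of_nonneg s.2.1, one_mul]
      exact mul_le_of_le_one_right (norm_nonneg u) s.2.2)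

lemma volterra_apply (u : C(I, ℝ)) (s : I) :
    volterra u s = ∫ τ in (0 : ℝ)..s, Set.IccExtend zero_le_one u τ := rfl

/-! ### Smooth dependence on parameters -/

/-- The curve `s ↦ (1 - s) x + u(s) e`, paired with the constant curve `x`; linear in `(x, u)`. -/
def curveMap {E : Type} [NormedAddCommGroup E] [NormedSpace ℝ E] (e : E) :
    (E × C(I, ℝ)) →L[ℝ] C(I, E × E) where
  toFun p := ⟨fun s => ((1 - (s : ℝ)) • p.1 + p.2 s • e, p.1), by fun_prop⟩
  map_add' p q := by
    ext s
    · simp [add_smul]; abel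
    · simp
  map_smul' c p := by
    ext s
    · simp [mul_smul, smul_comm c]
    · simp
  cont := by
    refine ContinuousMap.continuous_of_continuous_uncurry _ ?_
    simp only [Function.uncurry_def, ContinuousMap.coe_mk]
    fun_prop

lemma curveMap_apply {E : Type} [NormedAddCommGroup E] [NormedSpace ℝ E] (e : E)
    (p : E × C(I, ℝ)) (s : I) :
    curveMap e p s = ((1 - (s : ℝ)) • p.1 + p.2 s • e, p.1) := rfl

/-- Smooth dependence on parameters for `u' = g((1 - s) x + u e, x)`, `u(0) = 0`: when `g`
vanishes for `x = 0`, the integral equation has a solution on `[0, 1]` depending smoothly on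
small `x`, by the inverse function theorem in the space of curves. -/
lemma exists_smooth_solution {E : Type} [NormedAddCommGroup E] [NormedSpace ℝ E] [CompleteSpace E]
    (e : E) (g : C(E × E, ℝ)) (hg : ContDiff ℝ ∞ g) (hg0 : ∀ z, g (z, 0) = 0) :
    ∃ (V : Set E) (S : E → C(I, ℝ)), IsOpen V ∧ 0 ∈ V ∧ ContDiffOn ℝ ∞ S V ∧ S 0 = 0 ∧
      ∀ x ∈ V, S x = volterra (superpose g (curveMap e (x, S x))) := by
  set Φ : E × C(I, ℝ) → C(I, ℝ) := fun p => volterra (superpose g (curveMap e p)) with hΦdef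
  have hΦ : ContDiff ℝ ∞ Φ :=
    volterra.contDiff.comp ((contDiff_superpose g hg).comp (curveMap e).contDiff)
  set Ψ : E × C(I, ℝ) → E × C(I, ℝ) := fun p => (p.1, p.2 - Φ p) with hΨdef
  have hΨ : ContDiff ℝ ∞ Ψ := contDiff_fst.prodMk (contDiff_snd.sub hΦ)
  have hΦ0 : ∀ u, Φ (0, u) = 0 := by
    intro u
    have : superpose g (curveMap e (0, u)) = 0 := by
      ext s
      simp [superpose, curveMap_apply, hg0]
    simp [hΦdef, this]
  have hne : (∞ : WithTop ℕ∞) ≠ 0 := by simp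
  have hdΦ : HasFDerivAt Φ (fderiv ℝ Φ 0) 0 := (hΦ.differentiable hne 0).hasFDerivAt
  have hdΦ0 : ∀ y, fderiv ℝ Φ 0 (0, y) = 0 := by
    intro y
    have h1 : HasFDerivAt (fun u : C(I, ℝ) => Φ (0, u))
        ((fderiv ℝ Φ 0).comp (ContinuousLinearMap.inr ℝ E C(I, ℝ))) 0 :=
      HasFDerivAt.comp (g := Φ) (0 : C(I, ℝ)) hdΦ (ContinuousLinearMap.inr ℝ E C(I, ℝ)).hasFDerivAt
    have h2 : HasFDerivAt (fun u : C(I, ℝ) => Φ (0, u)) (0 : C(I, ℝ) →L[ℝ] C(I, ℝ)) 0 := by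
      simp only [hΦ0]
      exact hasFDerivAt_const _ _
    simpa using DFunLike.congr_fun (h1.unique h2) y
  -- The derivative at the origin is unipotent, because `Φ (0, ·)` vanishes identically.
  let T : (E × C(I, ℝ)) ≃L[ℝ] (E × C(I, ℝ)) :=
    (ContinuousLinearEquiv.refl ℝ E).skewProd (ContinuousLinearEquiv.refl ℝ C(I, ℝ))
      (-((fderiv ℝ Φ 0).comp (ContinuousLinearMap.inl ℝ E C(I, ℝ))))
  have hT : HasFDerivAt Ψ (T : (E × C(I, ℝ)) →L[ℝ] (E × C(I, ℝ))) 0 := by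
    have h1 : HasFDerivAt Ψ ((ContinuousLinearMap.fst ℝ E C(I, ℝ)).prod
        (ContinuousLinearMap.snd ℝ E C(I, ℝ) - fderiv ℝ Φ 0)) 0 :=
      hasFDerivAt_fst.prodMk (hasFDerivAt_snd.sub hdΦ)
    convert h1 using 1
    refine ContinuousLinearMap.ext fun p => ?_
    obtain ⟨h, y⟩ := p
    have : fderiv ℝ Φ 0 (h, y) = fderiv ℝ Φ 0 (h, 0) := by
      have : ((h, y) : E × C(I, ℝ)) = (h, 0) + (0, y) := by simp
      rw [this, map_add, hdΦ0, add_zero]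
    simp [T, this, sub_eq_add_neg]
  let P := hΨ.contDiffAt.toOpenPartialHomeomorph Ψ hT hne
  have hPc : ∀ p, P p = Ψ p := fun _ => rfl
  have h0s : (0 : E × C(I, ℝ)) ∈ P.source :=
    hΨ.contDiffAt.mem_toOpenPartialHomeomorph_source hT hne
  have hΨ0 : Ψ 0 = 0 := by
    have := hΦ0 0
    simp only [hΨdef, Prod.mk_zero_zero] at this ⊢
    simp [this]
  have hW : IsOpen {p | fderiv ℝ Ψ p ∈ Set.range
      ((↑) : ((E × C(I, ℝ)) ≃L[ℝ] (E × C(I, ℝ))) → _ →L[ℝ] _)} :=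
    ContinuousLinearEquiv.isOpen.preimage (hΨ.continuous_fderiv hne)
  set W := {p | fderiv ℝ Ψ p ∈ Set.range
      ((↑) : ((E × C(I, ℝ)) ≃L[ℝ] (E × C(I, ℝ))) → _ →L[ℝ] _)} with hWdef
  have hR : IsOpen (P.target ∩ P.symm ⁻¹' W) := P.isOpen_inter_preimage_symm hW
  have hsymm0 : P.symm 0 = 0 := by
    have := P.left_inv h0s
    rwa [hPc, hΨ0] at this
  have h0t : (0 : E × C(I, ℝ)) ∈ P.target := by
    have := P.map_source h0s
    rwa [hPc, hΨ0] at this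
  have hincl : Continuous (fun x : E => (x, (0 : C(I, ℝ)))) := by fun_prop
  refine ⟨(fun x : E => (x, (0 : C(I, ℝ)))) ⁻¹' (P.target ∩ P.symm ⁻¹' W),
    fun x => (P.symm (x, 0)).2, hR.preimage hincl, ?_, ?_, ?_, ?_⟩
  · refine ⟨h0t, ?_⟩
    change P.symm 0 ∈ W
    rw [hsymm0]
    exact ⟨T, hT.fderiv.symm⟩
  · intro x hx
    obtain ⟨L, hL⟩ := hx.2
    have h1 : HasFDerivAt P (L : (E × C(I, ℝ)) →L[ℝ] (E × C(I, ℝ))) (P.symm (x, 0)) := by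
      rw [hL]
      exact (hΨ.differentiable hne _).hasFDerivAt
    have h2 : ContDiffAt ℝ ∞ P.symm (x, 0) := P.contDiffAt_symm hx.1 h1 hΨ.contDiffAt
    have h3 : ContDiffAt ℝ ∞ (fun x : E => (x, (0 : C(I, ℝ)))) x :=
      (contDiff_id.prodMk contDiff_const).contDiffAt
    exact (contDiff_snd.contDiffAt.comp x (h2.comp x h3)).contDiffWithinAt
  · change (P.symm 0).2 = 0
    rw [hsymm0]; rfl
  · intro x hx
    have h1 : Ψ (P.symm (x, 0)) = (x, 0) := P.right_inv hx.1
    have h2 : (P.symm (x, 0)).1 = x := congrArg Prod.fst h1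
    have h3 : (P.symm (x, 0)).2 - Φ (P.symm (x, 0)) = 0 := congrArg Prod.snd h1
    have h4 : P.symm (x, 0) = (x, (P.symm (x, 0)).2) := Prod.ext h2 rfl
    rw [h4] at h3
    exact sub_eq_zero.1 h3

/-- The first variation of the solution in the direction `h` solves the linearized equation. -/
lemma fderiv_solution {E : Type} [NormedAddCommGroup E] [NormedSpace ℝ E]
    (e : E) (g : C(E × E, ℝ)) (hg : ContDiff ℝ 1 g) {V : Set E} (hV : IsOpen V)
    {S : E → C(I, ℝ)} (hS : ContDiffOn ℝ ∞ S V)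
    (hsol : ∀ x ∈ V, S x = volterra (superpose g (curveMap e (x, S x))))
    {x : E} (hx : x ∈ V) (h : E) :
    fderiv ℝ S x h = volterra (pointwiseApply (E × E) ℝ
      (superpose (fderivMap hg) (curveMap e (x, S x))) (curveMap e (h, fderiv ℝ S x h))) := by
  have hd : HasFDerivAt S (fderiv ℝ S x) x :=
    ((hS.contDiffAt (hV.mem_nhds hx)).differentiableAt (by simp)).hasFDerivAt
  have h1 : HasFDerivAt (fun x => (x, S x)) ((ContinuousLinearMap.id ℝ E).prod (fderiv ℝ S x)) x :=
    (hasFDerivAt_id x).prodMk hd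
  have h2 : HasFDerivAt (fun x => volterra (superpose g (curveMap e (x, S x)))) _ x :=
    volterra.hasFDerivAt.comp x ((hasFDerivAt_superpose g hg _).comp x
      ((curveMap e).hasFDerivAt.comp x h1))
  have h3 := h2.congr_of_eventuallyEq (f₁ := S)
    (Filter.eventuallyEq_of_mem (hV.mem_nhds hx) hsol)
  exact DFunLike.congr_fun (hd.unique h3) h

/-! ### The normalized Frobenius theorem -/

lemma linear_ode_endpoint {w a : ℝ → ℝ} (ha : Continuous a)
    (hw : ∀ s ∈ Set.Icc (0 : ℝ) 1, HasDerivAt w (-(a s) * w s) s) :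
    w 1 = Real.exp (-∫ τ in (0 : ℝ)..1, a τ) * w 0 := by
  have hA : ∀ s, HasDerivAt (fun s => ∫ τ in (0 : ℝ)..s, a τ) (a s) s := fun s =>
    intervalIntegral.integral_hasDerivAt_right (ha.intervalIntegrable _ _)
      (ha.stronglyMeasurableAtFilter _ _) ha.continuousAt
  have hm : ∀ s ∈ Set.Icc (0 : ℝ) 1,
      HasDerivAt (fun s => Real.exp (∫ τ in (0 : ℝ)..s, a τ) * w s) 0 s := by
    intro s hs
    refine ((hA s).exp.mul (hw s hs)).congr_deriv ?_
    ring
  have := constant_of_has_deriv_right_zero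
    (fun s hs => (hm s hs).continuousAt.continuousWithinAt)
    (fun s hs => (hm s (Set.Ico_subset_Icc_self hs)).hasDerivWithinAt) 1 (by simp)
  simp only [intervalIntegral.integral_same, Real.exp_zero, one_mul] at this
  rw [← this, ← mul_assoc, ← Real.exp_add]
  simp

/-- The exterior derivative of a one-form: `dβ(a, b) = (D_a β)(b) - (D_b β)(a)`. -/
def extd {E : Type} [NormedAddCommGroup E] [NormedSpace ℝ E] (β : E → E →L[ℝ] ℝ) (z a b : E) : ℝ :=
  fderiv ℝ β z a b - fderiv ℝ β z b a

/-- Frobenius for a one-form normalized by `β(e) = 1`. Contracting `β ∧ dβ = 0` with `e` gives the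
hypothesis `hint`. The potential `H x` is the height at which the curve tangent to `ker β` in the
plane spanned by `x` and `e`, starting at `x`, meets the axis `ℝ e`. -/
lemma frobenius_normalized {E : Type} [NormedAddCommGroup E] [NormedSpace ℝ E] [CompleteSpace E]
    (e : E) (β : E → E →L[ℝ] ℝ) (hβ : ContDiff ℝ ∞ β) {r : ℝ} (hr : 0 < r)
    (hβe : ∀ z ∈ Metric.ball (0 : E) r, β z e = 1)
    (hint : ∀ z ∈ Metric.ball (0 : E) r, ∀ a b,
      extd β z a b = β z a * extd β z e b - β z b * extd β z e a) :
    ∃ (V : Set E) (H : E → ℝ), IsOpen V ∧ 0 ∈ V ∧ V ⊆ Metric.ball 0 r ∧ ContDiffOn ℝ ∞ H V ∧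
      ∀ x ∈ V, ∃ ψ : ℝ, ψ ≠ 0 ∧ ∀ h, fderiv ℝ H x h = ψ * β x h := by
  have hne : (∞ : WithTop ℕ∞) ≠ 0 := by simp
  have hβd : ∀ z, HasFDerivAt β (fderiv ℝ β z) z := fun z =>
    (hβ.differentiable hne z).hasFDerivAt
  have hβ'c : Continuous (fderiv ℝ β) := hβ.continuous_fderiv hne
  have hgs : ContDiff ℝ ∞ (fun p : E × E => β p.1 p.2) :=
    (hβ.comp contDiff_fst).clm_apply contDiff_snd
  let g : C(E × E, ℝ) := ⟨fun p => β p.1 p.2, hgs.continuous⟩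
  have hg : ContDiff ℝ ∞ g := hgs
  have hg1 : ContDiff ℝ 1 g := hg.of_le (by norm_cast)
  have hdg : ∀ z v a b, fderiv ℝ g (z, v) (a, b) = fderiv ℝ β z a v + β z b := by
    intro z v a b
    have h1 : HasFDerivAt (fun p : E × E => β p.1) ((fderiv ℝ β z).comp
        (ContinuousLinearMap.fst ℝ E E)) (z, v) :=
      HasFDerivAt.comp (g := β) (z, v) (hβd z) hasFDerivAt_fst
    have h2 : HasFDerivAt g _ (z, v) := h1.clm_apply hasFDerivAt_snd
    rw [h2.fderiv]
    simp [add_comm]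
  obtain ⟨V₀, S, hV₀, h0V₀, hS, hS0, hsol⟩ :=
    exists_smooth_solution e g hg (fun z => map_zero (β z))
  have hcont : ContinuousOn (fun x => ‖curveMap e (x, S x)‖) V₀ :=
    ((curveMap e).continuous.comp_continuousOn
      (continuousOn_id.prodMk hS.continuousOn)).norm
  have hVo := hcont.isOpen_inter_preimage hV₀ (isOpen_Iio (a := r))
  set V := V₀ ∩ (fun x => ‖curveMap e (x, S x)‖) ⁻¹' Set.Iio r with hVdef
  have hVmem : ∀ x ∈ V, ∀ s : I, ‖((1 - (s : ℝ)) • x + S x s • e, x)‖ < r := fun x hx s =>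
    lt_of_le_of_lt ((curveMap e (x, S x)).norm_coe_le_norm s) hx.2
  let ev : C(I, ℝ) →L[ℝ] ℝ := ContinuousMap.evalCLM ℝ (1 : I)
  refine ⟨V, fun x => S x 1, hVo, ⟨h0V₀, ?_⟩, ?_, ?_, ?_⟩
  · have : ((0 : E), S 0) = 0 := by rw [hS0]; rfl
    simpa [this] using hr
  · intro x hx
    simpa using (norm_snd_le _).trans_lt (hVmem x hx 0)
  · exact ev.contDiff.comp_contDiffOn (hS.mono Set.inter_subset_left)
  intro x hx
  have hext : ∀ (u : C(I, ℝ)), Continuous (Set.IccExtend (zero_le_one (α := ℝ)) u) :=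
    fun u => u.continuous.Icc_extend'
  have hprim : ∀ (u : C(I, ℝ)) (s : ℝ), HasDerivAt
      (fun s => ∫ τ in (0 : ℝ)..s, Set.IccExtend zero_le_one u τ)
      (Set.IccExtend zero_le_one u s) s := fun u s =>
    intervalIntegral.integral_hasDerivAt_right ((hext u).intervalIntegrable _ _)
      ((hext u).stronglyMeasurableAtFilter _ _) (hext u).continuousAt
  set k := superpose g (curveMap e (x, S x)) with hk
  set K := Set.IccExtend (zero_le_one (α := ℝ)) k with hKdef
  set U : ℝ → ℝ := fun s => ∫ τ in (0 : ℝ)..s, K τ with hUdef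
  have hUd : ∀ s, HasDerivAt U (K s) s := hprim k
  have hUS : ∀ s : I, S x s = U s := fun s => by
    conv_lhs => rw [hsol x hx.1]
    rfl
  set C : ℝ → E := fun s => (1 - s) • x + U s • e with hCdef
  set C' : ℝ → E := fun s => -x + K s • e with hC'def
  have hCd : ∀ s, HasDerivAt C (C' s) s := by
    intro s
    have h1 : HasDerivAt (fun s : ℝ => (1 - s) • x) ((-1 : ℝ) • x) s :=
      ((hasDerivAt_id s).const_sub 1).smul_const x
    refine (h1.add ((hUd s).smul_const e)).congr_deriv ?_
    simp [hC'def]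
  have hCc : Continuous C := continuous_iff_continuousAt.2 fun s => (hCd s).continuousAt
  have hKc : Continuous K := hext k
  have hC'c : Continuous C' := by fun_prop
  have hCball : ∀ s ∈ Set.Icc (0 : ℝ) 1, C s ∈ Metric.ball (0 : E) r := by
    intro s hs
    have := (norm_fst_le _).trans_lt (hVmem x hx ⟨s, hs⟩)
    rw [hUS] at this
    simpa using this
  have hK : ∀ s ∈ Set.Icc (0 : ℝ) 1, K s = β (C s) x := by
    intro s hs
    rw [hKdef, Set.IccExtend_of_mem _ _ hs]
    change β ((1 - s) • x + S x ⟨s, hs⟩ • e) x = _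
    rw [hUS]
  let a : ℝ → ℝ := fun s => extd β (C s) e (C' s)
  have ha : Continuous a := by
    have h1 : Continuous fun s => fderiv ℝ β (C s) := hβ'c.comp hCc
    simp only [a, extd]
    fun_prop
  refine ⟨Real.exp (-∫ τ in (0 : ℝ)..1, a τ), (Real.exp_pos _).ne', fun h => ?_⟩
  have hSd : HasFDerivAt S (fderiv ℝ S x) x :=
    ((hS.contDiffAt (hV₀.mem_nhds hx.1)).differentiableAt hne).hasFDerivAt
  have hHd : HasFDerivAt (fun x => S x 1) (ev.comp (fderiv ℝ S x)) x :=
    ev.hasFDerivAt.comp x hSd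
  rw [hHd.fderiv]
  change fderiv ℝ S x h 1 = _
  have hvar := fderiv_solution e g hg1 hV₀ hS hsol hx.1 h
  set y := fderiv ℝ S x h with hy
  set l := pointwiseApply (E × E) ℝ
      (superpose (fderivMap hg1) (curveMap e (x, S x))) (curveMap e (h, y)) with hl
  set L := Set.IccExtend (zero_le_one (α := ℝ)) l with hLdef
  set Y : ℝ → ℝ := fun s => ∫ τ in (0 : ℝ)..s, L τ with hYdef
  have hYd : ∀ s, HasDerivAt Y (L s) s := hprim l
  have hyY : ∀ s : I, y s = Y s := fun s => by
    conv_lhs => rw [hvar]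
    rfl
  set X : ℝ → E := fun s => (1 - s) • h + Y s • e with hXdef
  have hXd : ∀ s, HasDerivAt X (-h + L s • e) s := by
    intro s
    have h1 : HasDerivAt (fun s : ℝ => (1 - s) • h) ((-1 : ℝ) • h) s :=
      ((hasDerivAt_id s).const_sub 1).smul_const h
    refine (h1.add ((hYd s).smul_const e)).congr_deriv ?_
    simp
  have hL : ∀ s ∈ Set.Icc (0 : ℝ) 1, L s = fderiv ℝ β (C s) (X s) x + β (C s) h := by
    intro s hs
    rw [hLdef, Set.IccExtend_of_mem _ _ hs]
    change fderiv ℝ g ((1 - s) • x + S x ⟨s, hs⟩ • e, x) ((1 - s) • h + y ⟨s, hs⟩ • e, h) = _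
    rw [hUS, hyY, hdg]
  -- Along the curve, `β(C')` vanishes, and so `β(X)` obeys a homogeneous linear equation.
  have hw : ∀ s ∈ Set.Icc (0 : ℝ) 1,
      HasDerivAt (fun s => β (C s) (X s)) (-(a s) * β (C s) (X s)) s := by
    intro s hs
    have hb := hCball s hs
    have h1 : HasDerivAt (fun s => β (C s)) (fderiv ℝ β (C s) (C' s)) s :=
      (hβd (C s)).comp_hasDerivAt s (hCd s)
    refine (h1.clm_apply (hXd s)).congr_deriv ?_
    have he1 : β (C s) e = 1 := hβe _ hb
    have he' : ∀ v, fderiv ℝ β (C s) v e = 0 := by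
      intro v
      have h2 : HasFDerivAt (fun z => β z e) _ (C s) := (hβd (C s)).clm_apply (hasFDerivAt_const e _)
      have h3 : HasFDerivAt (fun z => β z e) (0 : E →L[ℝ] ℝ) (C s) :=
        (hasFDerivAt_const (1 : ℝ) (C s)).congr_of_eventuallyEq
          (Filter.eventuallyEq_of_mem (Metric.isOpen_ball.mem_nhds hb) hβe)
      simpa using DFunLike.congr_fun (h2.unique h3) v
    have hC'0 : β (C s) (C' s) = 0 := by
      simp [hC'def, he1, hK s hs]
    have hi := hint _ hb (C' s) (X s)
    have hX : fderiv ℝ β (C s) (X s) (C' s) = -fderiv ℝ β (C s) (X s) x := by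
      simp [hC'def, he']
    rw [hC'0, zero_mul, zero_sub, extd, hX] at hi
    simp only [map_add, map_neg, map_smul, he1, smul_eq_mul, mul_one, hL s hs]
    linarith [hi, mul_comm (β (C s) (X s)) (a s)]
  have hend := linear_ode_endpoint ha hw
  have hU0 : U 0 = 0 := by simp [hUdef]
  have hY0 : Y 0 = 0 := by simp [hYdef]
  have hy1 : y 1 = Y 1 := hyY 1
  have h1e : β (C 1) e = 1 := hβe _ (hCball 1 (by simp))
  have hX1 : X 1 = Y 1 • e := by simp [hXdef]
  have hX0 : X 0 = h := by simp [hXdef, hY0]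
  have hC0 : C 0 = x := by simp [hCdef, hU0]
  simpa [hX1, hX0, hC0, h1e, hy1] using hend

/-! ### From vector fields on `ℝ³` to one-forms -/

lemma pd_component {J : E3 → E3} {x : E3} (hJ : DifferentiableAt ℝ J x) (i k : Fin 3) :
    pd i (fun y => J y k) x = fderiv ℝ J x (EuclideanSpace.single i 1) k := by
  have h : HasFDerivAt (fun y => J y k)
      ((EuclideanSpace.proj k : E3 →L[ℝ] ℝ).comp (fderiv ℝ J x)) x :=
    (EuclideanSpace.proj k : E3 →L[ℝ] ℝ).hasFDerivAt.comp x hJ.hasFDerivAt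
  rw [pd, h.fderiv]
  rfl

lemma clm_expand (A : E3 →L[ℝ] E3) (a : E3) (k : Fin 3) :
    A a k = a 0 * A (EuclideanSpace.single 0 1) k + a 1 * A (EuclideanSpace.single 1 1) k
      + a 2 * A (EuclideanSpace.single 2 1) k := by
  have ha : a = a 0 • EuclideanSpace.single 0 (1 : ℝ) + a 1 • EuclideanSpace.single 1 (1 : ℝ)
      + a 2 • EuclideanSpace.single 2 (1 : ℝ) := by
    ext j
    fin_cases j <;> simp
  conv_lhs => rw [ha]
  simp

/-- The contraction of `J♭ ∧ dJ♭ = (J · curl J) vol = 0` with three vectors. -/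
lemma jacobi_contraction {J : E3 → E3} {x : E3} (hJ : DifferentiableAt ℝ J x)
    (hjac : dot (J x) (curl J x) = 0) (e a b : E3) :
    inner ℝ (J x) e * (inner ℝ (fderiv ℝ J x a) b - inner ℝ (fderiv ℝ J x b) a)
      = inner ℝ (J x) a * (inner ℝ (fderiv ℝ J x e) b - inner ℝ (fderiv ℝ J x b) e)
        - inner ℝ (J x) b * (inner ℝ (fderiv ℝ J x e) a - inner ℝ (fderiv ℝ J x a) e) := by
  simp only [dot, curl, pd_component hJ, Fin.sum_univ_three, WithLp.equiv_symm_apply,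
    PiLp.toLp_apply, Matrix.cons_val] at hjac
  simp only [PiLp.inner_apply, Fin.sum_univ_three, clm_expand (fderiv ℝ J x) a,
    clm_expand (fderiv ℝ J x) b, clm_expand (fderiv ℝ J x) e, RCLike.inner_apply, conj_trivial]
  -- The coefficient is the determinant of `(e, a, b)`.
  linear_combination (e 0 * (a 1 * b 2 - a 2 * b 1) + e 1 * (a 2 * b 0 - a 0 * b 2)
    + e 2 * (a 0 * b 1 - a 1 * b 0)) * hjac

/-- Rescaling `J♭` so that its value on `e` is `1` preserves integrability. -/
lemma extd_normalized {J : E3 → E3} {q : E3 → ℝ} {x e : E3} (hJ : DifferentiableAt ℝ J x)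
    (hq : DifferentiableAt ℝ q x) (hqe : q x * inner ℝ (J x) e = 1)
    (hjac : dot (J x) (curl J x) = 0) (a b : E3) :
    extd (fun z => q z • innerSL ℝ (J z)) x a b
      = (q x * inner ℝ (J x) a) * extd (fun z => q z • innerSL ℝ (J z)) x e b
        - (q x * inner ℝ (J x) b) * extd (fun z => q z • innerSL ℝ (J z)) x e a := by
  have h1 : HasFDerivAt (fun z => innerSL ℝ (J z)) ((innerSL ℝ).comp (fderiv ℝ J x)) x :=
    (innerSL ℝ : E3 →L[ℝ] E3 →L[ℝ] ℝ).hasFDerivAt.comp x hJ.hasFDerivAt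
  have h2 : HasFDerivAt (fun z => q z • innerSL ℝ (J z)) _ x := hq.hasFDerivAt.smul h1
  have h3 : ∀ v w, fderiv ℝ (fun z => q z • innerSL ℝ (J z)) x v w
      = fderiv ℝ q x v * inner ℝ (J x) w + q x * inner ℝ (fderiv ℝ J x v) w := by
    intro v w
    rw [h2.fderiv]
    simp [add_comm]
  have hc := jacobi_contraction hJ hjac e a b
  simp only [extd, h3]
  linear_combination (fderiv ℝ q x b * inner ℝ (J x) a - fderiv ℝ q x a * inner ℝ (J x) b
    - q x * (inner ℝ (fderiv ℝ J x a) b - inner ℝ (fderiv ℝ J x b) a)) * hqe + q x ^ 2 * hc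

lemma extd_congr {E : Type} [NormedAddCommGroup E] [NormedSpace ℝ E] {β γ : E → E →L[ℝ] ℝ} {z : E}
    (h : β =ᶠ[nhds z] γ) (a b : E) : extd β z a b = extd γ z a b := by
  simp only [extd, h.fderiv_eq]

lemma extd_comp_add {E : Type} [NormedAddCommGroup E] [NormedSpace ℝ E] (β : E → E →L[ℝ] ℝ)
    (x₀ z a b : E) : extd (fun z => β (x₀ + z)) z a b = extd β (x₀ + z) a b := by
  simp only [extd, fderiv_comp_add_left]

/-- if J = n + μb satisfies the Jacobi identity, then locally
J = φ∇H for some smooth functions φ (nowhere zero) and H. -/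
theorem local_potential_of_poisson_vector
    (U : Set E3) (hU : IsOpen U) (t n b : E3 → E3)
    (hframe : IsFrameOn t n b U)
    (μ : E3 → ℝ) (hμ : ContDiffOn ℝ (⊤ : ℕ∞) μ U)
    (hjac : ∀ x ∈ U, dot (n x + μ x • b x)
        (curl (fun y => n y + μ y • b y) x) = 0) :
    ∀ x₀ ∈ U, ∃ V : Set E3, IsOpen V ∧ x₀ ∈ V ∧ V ⊆ U ∧
      ∃ φ H : E3 → ℝ,
        ContDiffOn ℝ (⊤ : ℕ∞) φ V ∧ ContDiffOn ℝ (⊤ : ℕ∞) H V ∧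
        (∀ x ∈ V, φ x ≠ 0) ∧
        (∀ x ∈ V, n x + μ x • b x = φ x • grad H x) := by
  intro x₀ hx₀
  obtain ⟨-, hn, hb, hon⟩ := hframe
  set J : E3 → E3 := fun y => n y + μ y • b y with hJdef
  change ∀ x ∈ U, dot (J x) (curl J x) = 0 at hjac
  have hne : (∞ : WithTop ℕ∞) ≠ 0 := by simp
  have hJ : ContDiffOn ℝ ∞ J U := hn.add (hμ.smul hb)
  obtain ⟨-, hnn, -, -, -, hnb, -⟩ := hon x₀ hx₀
  set e : E3 := n x₀ with he
  set f : E3 → ℝ := fun z => inner ℝ (J z) e with hf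
  have hfs : ContDiffOn ℝ ∞ f U := hJ.inner ℝ contDiffOn_const
  have hf0 : f x₀ = 1 := by
    have h1 : inner ℝ (b x₀) (n x₀) = 0 := by
      rw [← hnb]
      simp [dot, PiLp.inner_apply, he]
    have h2 : inner ℝ (n x₀) (n x₀) = 1 := by
      rw [real_inner_self_eq_norm_sq, hnn, one_pow]
    simp only [hf, hJdef, he, inner_add_left, inner_smul_left, h1, h2]
    simp
  have hW : IsOpen (U ∩ f ⁻¹' {0}ᶜ) :=
    hfs.continuousOn.isOpen_inter_preimage hU isOpen_compl_singleton
  obtain ⟨R, hR, hball⟩ := Metric.isOpen_iff.1 hW x₀ ⟨hx₀, by simp [hf0]⟩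
  let χ : ContDiffBump x₀ := ⟨R / 3, 2 * R / 3, by positivity, by linarith⟩
  let γ : E3 → E3 →L[ℝ] ℝ := fun z => (f z)⁻¹ • innerSL ℝ (J z)
  have hγ : ContDiffOn ℝ ∞ γ (Metric.ball x₀ R) :=
    ((hfs.mono fun z hz => (hball hz).1).inv fun z hz => (hball hz).2).smul
      ((innerSL ℝ : E3 →L[ℝ] E3 →L[ℝ] ℝ).contDiff.comp_contDiffOn
        (hJ.mono fun z hz => (hball hz).1))
  -- The cutoff makes the normalized form globally smooth without changing it near `x₀`.
  let γ' : E3 → E3 →L[ℝ] ℝ := fun z => χ z • γ z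
  have hγ' : ContDiff ℝ ∞ γ' := by
    rw [contDiff_iff_contDiffAt]
    intro z
    by_cases hz : z ∈ Metric.ball x₀ R
    · exact χ.contDiffAt.smul (hγ.contDiffAt (Metric.isOpen_ball.mem_nhds hz))
    · have hz' : z ∈ (Metric.closedBall x₀ (2 * R / 3))ᶜ := by
        simp only [Metric.mem_ball, not_lt, Set.mem_compl_iff, Metric.mem_closedBall, not_le] at hz ⊢
        linarith
      refine contDiffAt_const (c := (0 : E3 →L[ℝ] ℝ)) |>.congr_of_eventuallyEq ?_
      filter_upwards [Metric.isClosed_closedBall.isOpen_compl.mem_nhds hz'] with y hy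
      have : χ y = 0 := χ.zero_of_le_dist <| by
        rw [Set.mem_compl_iff, Metric.mem_closedBall, not_le] at hy
        exact hy.le
      simp [γ', this]
  have hγγ' : ∀ z ∈ Metric.ball x₀ (R / 3), γ' z = γ z := by
    intro z hz
    have : χ z = 1 := χ.one_of_mem_closedBall (Metric.ball_subset_closedBall hz)
    simp [γ', this]
  have hsub : Metric.ball x₀ (R / 3) ⊆ Metric.ball x₀ R := Metric.ball_subset_ball (by linarith)
  have hshift : ∀ z ∈ Metric.ball (0 : E3) (R / 3), x₀ + z ∈ Metric.ball x₀ (R / 3) := by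
    intro z hz
    simpa [dist_eq_norm] using hz
  have hγapp : ∀ z ∈ Metric.ball x₀ (R / 3), ∀ v, γ' z v = (f z)⁻¹ * inner ℝ (J z) v := by
    intro z hz v
    rw [hγγ' z hz]
    simp [γ]
  have hγe : ∀ z ∈ Metric.ball x₀ (R / 3), γ' z e = 1 := by
    intro z hz
    rw [hγapp z hz]
    exact inv_mul_cancel₀ (hball (hsub hz)).2
  have hγint : ∀ z ∈ Metric.ball x₀ (R / 3), ∀ v w,
      extd γ' z v w = γ' z v * extd γ' z e w - γ' z w * extd γ' z e v := by
    intro z hz v w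
    have hzU := (hball (hsub hz)).1
    have hfz : f z ≠ 0 := (hball (hsub hz)).2
    have hev : γ' =ᶠ[nhds z] γ :=
      Filter.eventuallyEq_of_mem (Metric.isOpen_ball.mem_nhds hz) hγγ'
    have hJz : DifferentiableAt ℝ J z := (hJ.contDiffAt (hU.mem_nhds hzU)).differentiableAt hne
    have hfd : DifferentiableAt ℝ f z := (hfs.contDiffAt (hU.mem_nhds hzU)).differentiableAt hne
    rw [extd_congr hev, extd_congr hev, extd_congr hev, hγapp z hz, hγapp z hz]
    exact extd_normalized (q := fun z => (f z)⁻¹) hJz (hfd.inv hfz) (inv_mul_cancel₀ hfz)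
      (hjac z hzU) v w
  obtain ⟨V, H, hV, h0V, hVb, hH, hdH⟩ := frobenius_normalized e (fun z => γ' (x₀ + z))
    (hγ'.comp (contDiff_const.add contDiff_id)) (by positivity : 0 < R / 3)
    (fun z hz => hγe _ (hshift z hz))
    (fun z hz v w => by
      rw [extd_comp_add, extd_comp_add, extd_comp_add]
      exact hγint _ (hshift z hz) v w)
  have hVb' : ∀ x, x - x₀ ∈ V → x ∈ Metric.ball x₀ (R / 3) := by
    intro x hx
    simpa using hshift _ (hVb hx)
  have hVo : IsOpen ((fun x : E3 => x - x₀) ⁻¹' V) := hV.preimage (by fun_prop)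
  have hH' : ContDiffOn ℝ ∞ (fun x => H (x - x₀)) ((fun x : E3 => x - x₀) ⁻¹' V) :=
    hH.comp (contDiff_id.sub contDiff_const).contDiffOn fun x hx => hx
  have hdH' : ∀ x, x - x₀ ∈ V → ∃ ψ : ℝ, ψ ≠ 0 ∧
      ∀ h, fderiv ℝ (fun x => H (x - x₀)) x h = ψ * γ' x h := by
    intro x hx
    obtain ⟨ψ, hψ, h⟩ := hdH _ hx
    refine ⟨ψ, hψ, fun v => ?_⟩
    rw [fderiv_comp_sub, h]
    simp
  have hnz : ∀ x, x - x₀ ∈ V → fderiv ℝ (fun x => H (x - x₀)) x e ≠ 0 := by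
    intro x hx
    obtain ⟨ψ, hψ, h⟩ := hdH' x hx
    rw [h, hγe x (hVb' x hx), mul_one]
    exact hψ
  have hVU : (fun x : E3 => x - x₀) ⁻¹' V ⊆ U := fun x hx => (hball (hsub (hVb' x hx))).1
  refine ⟨(fun x : E3 => x - x₀) ⁻¹' V, hVo, by simpa using h0V, hVU,
    fun x => f x / fderiv ℝ (fun x => H (x - x₀)) x e, fun x => H (x - x₀), ?_, hH', ?_, ?_⟩
  · refine (hfs.mono hVU).div ?_ fun x hx => hnz x hx
    exact (hH'.fderiv_of_isOpen hVo (m := ∞) (by simp)).clm_apply contDiffOn_const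
  · exact fun x hx => div_ne_zero (hball (hsub (hVb' x hx))).2 (hnz x hx)
  · intro x hx
    obtain ⟨ψ, hψ, h⟩ := hdH' x hx
    have hfx : f x ≠ 0 := (hball (hsub (hVb' x hx))).2
    have hφ : f x / fderiv ℝ (fun x => H (x - x₀)) x e = f x / ψ := by
      rw [h, hγe x (hVb' x hx), mul_one]
    have hpd : ∀ i, pd i (fun x => H (x - x₀)) x = ψ * ((f x)⁻¹ * J x i) := by
      intro i
      rw [pd, h, hγapp x (hVb' x hx), EuclideanSpace.inner_single_right]
      simp
    change J x = (f x / fderiv ℝ (fun x => H (x - x₀)) x e) • grad (fun x => H (x - x₀)) x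
    rw [hφ]
    ext i
    fin_cases i <;> simp [grad, hpd] <;> field_simp
end
end
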